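/- arXiv:1906.05515 — 6 statements merged into one kernel-verified Lean document; each statement's English description precedes it below -/
import Mathlib

section
/- Let M be a right coherent monoid and I a non-empty set. Then the Brandt monoid B(M; I)¹ over M is right coherent. -/
def IsRightCongruence {M : Type*} [Monoid M] (r : M → M → Prop) : Prop :=
  Equivalence r ∧ ∀ a b c : M, r a b → r (a * c) (b * c)

def RCongGenBy {M : Type*} [Monoid M] (H : Set (M × M)) (r : M → M → Prop) : Prop :=
  IsRightCongruence r ∧ (∀ p ∈ H, r p.1 p.2) ∧
    ∀ r' : M → M → Prop, IsRightCongruence r' → (∀ p ∈ H, r' p.1 p.2) →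
      ∀ x y : M, r x y → r' x y

def FGRightCongruence {M : Type*} [Monoid M] (r : M → M → Prop) : Prop :=
  ∃ H : Set (M × M), H.Finite ∧ RCongGenBy H r

def RightCoherent (M : Type*) [Monoid M] : Prop :=
  ∀ r : M → M → Prop, FGRightCongruence r → ∀ a b : M,
    (∃ C : Finset M,
      {x : M | (∃ s : M, r x (a * s)) ∧ (∃ t : M, r x (b * t))} =
        ⋃ c ∈ C, {x : M | ∃ s : M, r x (c * s)}) ∧
    FGRightCongruence (fun u v : M => r (a * u) (a * v))

namespace BrandtCoh

section free
variable {I M : Type*} [Monoid M]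

def act (x : I × M) (m : M) : I × M := (x.1, x.2 * m)

theorem act_act (x : I × M) (m n : M) : act (act x m) n = act x (m * n) := by
  simp [act, mul_assoc]

theorem act_one (x : I × M) : act x (1 : M) = x := by simp [act]

def Step (H : Set ((I × M) × (I × M))) (x y : I × M) : Prop :=
  ∃ p ∈ H, ∃ m, x = act p.1 m ∧ y = act p.2 m

def G (H : Set ((I × M) × (I × M))) : I × M → I × M → Prop := Relation.EqvGen (Step H)

def IsC (r : I × M → I × M → Prop) : Prop :=
  Equivalence r ∧ ∀ x y m, r x y → r (act x m) (act y m)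

theorem G_le {H : Set ((I × M) × (I × M))} {R : I × M → I × M → Prop} (hR : Equivalence R)
    (h : ∀ p ∈ H, ∀ m, R (act p.1 m) (act p.2 m)) {x y} (hxy : G H x y) : R x y := by
  induction hxy with
  | rel x y h' =>
    obtain ⟨p, hp, m, rfl, rfl⟩ := h'
    exact h p hp m
  | refl x => exact hR.refl x
  | symm x y _ ih => exact hR.symm ih
  | trans x y z _ _ ih1 ih2 => exact hR.trans ih1 ih2

theorem G_equiv (H : Set ((I × M) × (I × M))) : Equivalence (G H) :=
  Relation.EqvGen.is_equivalence _

theorem G_isC (H : Set ((I × M) × (I × M))) : IsC (G H) := by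
  refine ⟨G_equiv H, fun x y m h => ?_⟩
  refine G_le (R := fun x y => G H (act x m) (act y m)) ?_ ?_ h
  · exact ⟨fun _ => (G_equiv H).refl _, fun h => (G_equiv H).symm h,
      fun h h' => (G_equiv H).trans h h'⟩
  · intro p hp k
    rw [act_act, act_act]
    exact Relation.EqvGen.rel _ _ ⟨p, hp, _, rfl, rfl⟩

theorem G_mem {H : Set ((I × M) × (I × M))} {x y} (h : (x, y) ∈ H) : G H x y :=
  Relation.EqvGen.rel _ _ ⟨(x, y), h, 1, by simp [act_one], by simp [act_one]⟩

def In (r : I × M → I × M → Prop) (x w : I × M) : Prop := ∃ s, r w (act x s)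

def FGs (r : I × M → I × M → Prop) (P : I × M → Prop) : Prop :=
  ∃ C : Set (I × M), C.Finite ∧ ∀ w, P w ↔ ∃ c ∈ C, In r c w

def Ann (r : I × M → I × M → Prop) (x : I × M) : Prop :=
  FGRightCongruence (fun u v => r (act x u) (act x v))

def Inter (r : I × M → I × M → Prop) (x y : I × M) : Prop :=
  FGs r (fun w => In r x w ∧ In r y w)

theorem In_self {r : I × M → I × M → Prop} (hr : IsC r) (x) : In r x x :=
  ⟨1, by rw [act_one]; exact hr.1.refl _⟩

theorem In_trans {r : I × M → I × M → Prop} (hr : IsC r) {x y w} (h : In r x y) (h' : In r y w) :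
    In r x w := by
  obtain ⟨s, hs⟩ := h
  obtain ⟨t, ht⟩ := h'
  refine ⟨s * t, hr.1.trans ht ?_⟩
  rw [← act_act]
  exact hr.2 _ _ _ hs

theorem In_congr {r : I × M → I × M → Prop} (hr : IsC r) {x y w} (h : r x y) :
    In r x w ↔ In r y w :=
  ⟨In_trans hr ⟨1, by rw [act_one]; exact h⟩,
   In_trans hr ⟨1, by rw [act_one]; exact hr.1.symm h⟩⟩

theorem FGs_union {r : I × M → I × M → Prop} {ι : Type*} {C : Set ι} (hC : C.Finite)
    {P : I × M → Prop} {Q : ι → I × M → Prop} (hQ : ∀ c ∈ C, FGs r (Q c))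
    (hP : ∀ w, P w ↔ ∃ c ∈ C, Q c w) : FGs r P := by
  choose! D hD hD' using hQ
  refine ⟨⋃ c ∈ C, D c, hC.biUnion hD, fun w => ?_⟩
  rw [hP]
  constructor
  · rintro ⟨c, hc, h⟩
    obtain ⟨d, hd, h⟩ := (hD' c hc w).1 h
    exact ⟨d, Set.mem_biUnion hc hd, h⟩
  · rintro ⟨d, hd, h⟩
    obtain ⟨c, hc, hd⟩ := Set.mem_iUnion₂.1 hd
    exact ⟨c, hc, (hD' c hc w).2 ⟨d, hd, h⟩⟩

theorem FGs_congr {r : I × M → I × M → Prop} {P Q : I × M → Prop} (h : ∀ w, P w ↔ Q w)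
    (hQ : FGs r Q) : FGs r P := by
  obtain ⟨C, hC, h'⟩ := hQ
  exact ⟨C, hC, fun w => (h w).trans (h' w)⟩

theorem coh_inter {ρ : M → M → Prop} (hcoh : RightCoherent M) (hρ : FGRightCongruence ρ)
    (a b : M) : ∃ C : Set M, C.Finite ∧ ∀ x, ((∃ s, ρ x (a * s)) ∧ (∃ t, ρ x (b * t))) ↔
      ∃ c ∈ C, ∃ s, ρ x (c * s) := by
  obtain ⟨⟨C, hC⟩, -⟩ := hcoh ρ hρ a b
  refine ⟨C, C.finite_toSet, fun x => ?_⟩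
  have := Set.ext_iff.1 hC x
  simpa using this

theorem Ann_reduce (hcoh : RightCoherent M) {r : I × M → I × M → Prop}
    {i : I} (h : Ann r (i, 1)) (a : M) : Ann r (i, a) := by
  have := (hcoh _ h a a).2
  simpa [Ann, act] using this

theorem Inter_same (hcoh : RightCoherent M) {r : I × M → I × M → Prop} (hr : IsC r)
    {i : I} (h : Ann r (i, 1)) (a b : M) : Inter r (i, a) (i, b) := by
  obtain ⟨C, hC, hC'⟩ := coh_inter hcoh h a b
  simp only [act, one_mul] at hC'
  refine ⟨(fun c => (i, c)) '' C, hC.image _, fun w => ?_⟩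
  constructor
  · rintro ⟨⟨s, hs⟩, ⟨t, ht⟩⟩
    obtain ⟨c, hc, k, hk⟩ := (hC' (a * s)).1 ⟨⟨s, hr.1.refl _⟩, ⟨t, hr.1.trans (hr.1.symm hs) ht⟩⟩
    exact ⟨_, ⟨c, hc, rfl⟩, k, hr.1.trans hs hk⟩
  · rintro ⟨_, ⟨c, hc, rfl⟩, hw⟩
    obtain ⟨⟨s, hs⟩, ⟨t, ht⟩⟩ := (hC' c).2 ⟨c, hc, 1, by rw [mul_one]; exact hr.1.refl _⟩
    exact ⟨In_trans hr ⟨s, hs⟩ hw, In_trans hr ⟨t, ht⟩ hw⟩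

theorem In_gen {r : I × M → I × M → Prop} {i : I} {w : I × M} (h : In r (i, 1) w) :
    ∃ d, r w (i, d) := by
  obtain ⟨s, hs⟩ := h
  exact ⟨s, by simpa [act] using hs⟩

theorem Inter_reduce (hcoh : RightCoherent M) {r : I × M → I × M → Prop} (hr : IsC r)
    {i j : I} (hi : Ann r (i, 1)) (hj : Ann r (j, 1)) (hij : Inter r (i, 1) (j, 1)) (a b : M) :
    Inter r (i, a) (j, b) := by
  obtain ⟨C, hC, hC'⟩ := hij
  have gen : ∀ (k : I) (a : M), In r (k, 1) (k, a) := fun k a =>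
    ⟨a, by simpa [act] using hr.1.refl _⟩
  refine FGs_union (Q := fun c w => In r (i, a) w ∧ In r c w ∧ In r (j, b) w) hC ?_ ?_
  · intro c hc
    obtain ⟨hci, hcj⟩ := (hC' c).2 ⟨c, hc, In_self hr c⟩
    obtain ⟨d, hd⟩ := In_gen hci
    obtain ⟨C2, hC2, hC2'⟩ := Inter_same hcoh hr hi a d
    refine FGs_union (Q := fun e w => In r e w ∧ In r (j, b) w) hC2 ?_ ?_
    · intro e he
      have h1 := ((hC2' e).2 ⟨e, he, In_self hr e⟩).2
      rw [← In_congr hr hd] at h1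
      obtain ⟨d', hd'⟩ := In_gen (In_trans hr hcj h1)
      refine FGs_congr ?_ (Inter_same hcoh hr hj d' b)
      intro w
      rw [In_congr hr hd']
    · intro w
      have : (In r (i, a) w ∧ In r (i, d) w) ↔ _ := hC2' w
      rw [← In_congr hr hd] at this
      rw [← and_assoc, this]
      constructor
      · rintro ⟨⟨c, h1, h2⟩, h3⟩; exact ⟨c, h1, h2, h3⟩
      · rintro ⟨c, h1, h2, h3⟩; exact ⟨⟨c, h1, h2⟩, h3⟩
  · intro w
    constructor
    · rintro ⟨h1, h2⟩
      obtain ⟨c, hc, h⟩ := (hC' w).1 ⟨In_trans hr (gen _ _) h1, In_trans hr (gen _ _) h2⟩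
      exact ⟨c, hc, h1, h, h2⟩
    · rintro ⟨c, hc, h1, h, h2⟩
      exact ⟨h1, h2⟩

/-- Restriction of a set of pairs to one component. -/
def res (H : Set ((I × M) × (I × M))) (i : I) : Set (M × M) :=
  {p | ((i, p.1), (i, p.2)) ∈ H}

theorem res_finite {H : Set ((I × M) × (I × M))} (hH : H.Finite) (i : I) : (res H i).Finite :=
  hH.preimage (f := fun p : M × M => ((i, p.1), (i, p.2)))
    (by rintro ⟨a, b⟩ _ ⟨c, d⟩ _ h; simpa using h)

/-- The right congruence generated by a component. -/
def cg (H : Set ((I × M) × (I × M))) (i : I) (u v : M) : Prop :=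
  G {p ∈ H | p.1.1 = i ∧ p.2.1 = i} (i, u) (i, v)

theorem cg_fg {H : Set ((I × M) × (I × M))} (hH : H.Finite) (i : I) :
    FGRightCongruence (cg H i) := by
  refine ⟨res H i, res_finite hH i, ⟨⟨?_, ?_⟩, ?_, ?_⟩⟩
  · exact ⟨fun _ => (G_equiv _).refl _, fun h => (G_equiv _).symm h,
      fun h h' => (G_equiv _).trans h h'⟩
  · intro a b c h
    exact (G_isC _).2 _ _ c h
  · intro p hp
    exact G_mem ⟨hp, rfl, rfl⟩
  · intro r' hr' hp u v h
    have := G_le (R := fun x y => x.1 = y.1 ∧ (x.1 = i → r' x.2 y.2)) ?_ ?_ h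
    · exact this.2 rfl
    · refine ⟨fun x => ⟨rfl, fun _ => hr'.1.refl _⟩, fun h => ⟨h.1.symm, fun h' =>
        hr'.1.symm (h.2 (h.1.trans h'))⟩, fun h h' => ⟨h.1.trans h'.1, fun h3 =>
        hr'.1.trans (h.2 h3) (h'.2 (h.1.symm.trans h3))⟩⟩
    · rintro ⟨⟨a, b⟩, ⟨c, d⟩⟩ ⟨hp', h1, h2⟩ m
      simp only at h1 h2
      subst h1 h2
      exact ⟨rfl, fun _ => hr'.2 b d m (hp (b, d) hp')⟩

theorem cg_le {H : Set ((I × M) × (I × M))} {i : I} {u v : M} (h : cg H i u v) :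
    G H (i, u) (i, v) := by
  refine G_le (G_equiv H) ?_ h
  rintro p ⟨hp, -⟩ m
  exact (G_isC H).2 _ _ _ (G_mem hp)

theorem Ann_single {H : Set ((I × M) × (I × M))} (hH : H.Finite) {i : I}
    (h : ∀ p ∈ H, p.1.1 = i ∧ p.2.1 = i) : Ann (G H) (i, 1) := by
  have := cg_fg hH i
  have h' : {p ∈ H | p.1.1 = i ∧ p.2.1 = i} = H := by
    ext p; exact ⟨fun h => h.1, fun hp => ⟨hp, h p hp⟩⟩
  unfold cg at this
  rw [h'] at this
  simpa [Ann, act] using this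

theorem coh_pairs (hcoh : RightCoherent M) {ρ : M → M → Prop} (hρ : FGRightCongruence ρ)
    (a b : M) : ∃ D : Set (M × M), D.Finite ∧ (∀ p ∈ D, ρ (a * p.1) (b * p.2)) ∧
      ∀ s t, ρ (a * s) (b * t) → ∃ p ∈ D, ∃ w, ρ (a * s) (a * (p.1 * w)) ∧
        ρ (b * t) (b * (p.2 * w)) := by
  obtain ⟨C, hC, hC'⟩ := coh_inter hcoh hρ a b
  obtain ⟨_, -, hr, -⟩ := hρ
  have : ∀ c ∈ C, ∃ p : M × M, ρ c (a * p.1) ∧ ρ c (b * p.2) := by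
    intro c hc
    obtain ⟨⟨s, hs⟩, ⟨t, ht⟩⟩ := (hC' c).2 ⟨c, hc, 1, by rw [mul_one]; exact hr.1.refl _⟩
    exact ⟨(s, t), hs, ht⟩
  choose! g hg1 hg2 using this
  refine ⟨g '' C, hC.image _, ?_, ?_⟩
  · rintro _ ⟨c, hc, rfl⟩
    exact hr.1.trans (hr.1.symm (hg1 c hc)) (hg2 c hc)
  · intro s t h
    obtain ⟨c, hc, w, hw⟩ := (hC' (a * s)).1 ⟨⟨s, hr.1.refl _⟩, ⟨t, h⟩⟩
    refine ⟨_, ⟨c, hc, rfl⟩, w, ?_, ?_⟩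
    · rw [← mul_assoc]
      exact hr.1.trans hw (hr.2 _ _ _ (hg1 c hc))
    · rw [← mul_assoc]
      exact hr.1.trans (hr.1.symm h) (hr.1.trans hw (hr.2 _ _ _ (hg2 c hc)))

theorem elimination (hcoh : RightCoherent M) {H : Set ((I × M) × (I × M))} (hH : H.Finite) (n : I)
    (T : Set I) (hT : ∀ p ∈ H, p.1.1 ∈ T ∧ p.2.1 ∈ T) :
    ∃ H' : Set ((I × M) × (I × M)), H'.Finite ∧
      (∀ p ∈ H', (p.1.1 ∈ T ∧ p.1.1 ≠ n) ∧ (p.2.1 ∈ T ∧ p.2.1 ≠ n)) ∧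
      (∀ x y, G H' x y → G H x y) ∧
      (∀ x y, x.1 ≠ n → y.1 ≠ n → G H x y → G H' x y) ∧
      ∃ B : Set ((I × M) × M), B.Finite ∧
        (∀ b ∈ B, b.1.1 ∈ T ∧ b.1.1 ≠ n ∧ G H b.1 (n, b.2)) ∧
        ∀ x m, x.1 ≠ n → G H x (n, m) → ∃ b ∈ B, ∃ s, G H (n, m) (n, b.2 * s) := by
  have hρ := cg_fg hH n
  set ρ := cg H n with hρdef
  have hρC : IsRightCongruence ρ := by
    obtain ⟨_, -, hr, -⟩ := hρ
    exact hr
  choose D hD hD1 hD2 using fun a b => coh_pairs hcoh hρ a b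
  have hA : ∀ a, ∃ A : Set (M × M), A.Finite ∧ RCongGenBy A (fun u v => ρ (a * u) (a * v)) :=
    fun a => (hcoh ρ hρ a a).2
  choose A hAf hA using hA
  let B : Set ((I × M) × M) :=
    {b | b.1.1 ≠ n ∧ ((b.1, (n, b.2)) ∈ H ∨ ((n, b.2), b.1) ∈ H)}
  have hB : B.Finite := by
    refine ((hH.image (fun p => (p.1, p.2.2))).union (hH.image (fun p => (p.2, p.1.2)))).subset ?_
    rintro ⟨x, b⟩ ⟨-, h | h⟩
    · exact Or.inl ⟨_, h, rfl⟩
    · exact Or.inr ⟨_, h, rfl⟩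
  have hBT : ∀ b ∈ B, b.1.1 ∈ T ∧ b.1.1 ≠ n ∧ G H b.1 (n, b.2) := by
    rintro b ⟨h1, h | h⟩
    · exact ⟨(hT _ h).1, h1, G_mem h⟩
    · exact ⟨(hT _ h).2, h1, (G_equiv H).symm (G_mem h)⟩
  let H' : Set ((I × M) × (I × M)) :=
    {p ∈ H | p.1.1 ≠ n ∧ p.2.1 ≠ n} ∪
    (⋃ k ∈ B, (fun q : M × M => (act k.1 q.1, act k.1 q.2)) '' A k.2) ∪
    (⋃ k ∈ B, ⋃ l ∈ B, (fun q : M × M => (act k.1 q.1, act l.1 q.2)) '' D k.2 l.2)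
  have hH' : H'.Finite := by
    refine ((hH.subset (fun p h => h.1)).union ?_).union ?_
    · exact hB.biUnion fun k _ => (hAf _).image _
    · exact hB.biUnion fun k _ => hB.biUnion fun l _ => (hD _ _).image _
  have hmem1 : ∀ k ∈ B, ∀ q ∈ A k.2, (act k.1 q.1, act k.1 q.2) ∈ H' := fun k hk q hq =>
    Or.inl (Or.inr (Set.mem_biUnion hk ⟨q, hq, rfl⟩))
  have hmem2 : ∀ k ∈ B, ∀ l ∈ B, ∀ q ∈ D k.2 l.2, (act k.1 q.1, act l.1 q.2) ∈ H' :=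
    fun k hk l hl q hq => Or.inr (Set.mem_biUnion hk (Set.mem_biUnion hl ⟨q, hq, rfl⟩))
  have hcases : ∀ p ∈ H', (p ∈ H ∧ p.1.1 ≠ n ∧ p.2.1 ≠ n) ∨
      (∃ k ∈ B, ∃ l ∈ B, ∃ q : M × M, ρ (k.2 * q.1) (l.2 * q.2) ∧
        p = (act k.1 q.1, act l.1 q.2)) := by
    rintro p ((hp | hp) | hp)
    · exact Or.inl hp
    · obtain ⟨k, hk, q, hq, rfl⟩ := Set.mem_iUnion₂.1 hp
      exact Or.inr ⟨k, hk, k, hk, q, (hA k.2).2.1 q hq, rfl⟩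
    · obtain ⟨k, hk, hp⟩ := Set.mem_iUnion₂.1 hp
      obtain ⟨l, hl, q, hq, rfl⟩ := Set.mem_iUnion₂.1 hp
      exact Or.inr ⟨k, hk, l, hl, q, hD1 _ _ q hq, rfl⟩
  have e' := G_equiv H'
  have e := G_equiv H
  -- compatibility inside the annihilator
  have keyA : ∀ k ∈ B, ∀ u v, ρ (k.2 * u) (k.2 * v) → G H' (act k.1 u) (act k.1 v) := by
    intro k hk u v h
    refine (hA k.2).2.2 (fun u v => G H' (act k.1 u) (act k.1 v)) ⟨?_, ?_⟩ ?_ u v h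
    · exact ⟨fun _ => e'.refl _, fun h => e'.symm h, fun h h' => e'.trans h h'⟩
    · intro a b c h
      rw [← act_act, ← act_act]
      exact (G_isC H').2 _ _ _ h
    · intro q hq
      exact G_mem (hmem1 k hk q hq)
  have key : ∀ k ∈ B, ∀ l ∈ B, ∀ s t, ρ (k.2 * s) (l.2 * t) →
      G H' (act k.1 s) (act l.1 t) := by
    intro k hk l hl s t h
    obtain ⟨q, hq, w, h1, h2⟩ := hD2 _ _ s t h
    refine e'.trans (keyA k hk _ _ h1) (e'.trans ?_ (e'.symm (keyA l hl _ _ h2)))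
    rw [← act_act, ← act_act]
    exact (G_isC H').2 _ _ _ (G_mem (hmem2 k hk l hl q hq))
  let Q : I × M → Set (I × M) := fun p => {y | (p.1 ≠ n ∧ G H' y p) ∨
    (p.1 = n ∧ ∃ k ∈ B, ∃ s, ρ p.2 (k.2 * s) ∧ G H' y (act k.1 s))}
  have hcross : ∀ k ∈ B, ∀ m, Q (act k.1 m) = Q (act (n, k.2) m) := by
    intro k hk m
    ext y
    constructor
    · rintro (⟨-, h⟩ | ⟨h, -⟩)
      · exact Or.inr ⟨rfl, k, hk, m, hρC.1.refl _, h⟩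
      · exact absurd h hk.1
    · rintro (⟨h, -⟩ | ⟨-, l, hl, s, h1, h2⟩)
      · exact absurd rfl h
      · exact Or.inl ⟨hk.1, e'.trans h2 (e'.symm (key k hk l hl _ _ h1))⟩
  have hQ : ∀ x y, G H x y → Q x = Q y := by
    intro x y h
    refine G_le (R := fun x y => Q x = Q y) ⟨fun _ => rfl, fun h => h.symm,
      fun h h' => h.trans h'⟩ ?_ h
    rintro ⟨⟨i, a⟩, ⟨j, b⟩⟩ hp m
    by_cases hi : i = n <;> by_cases hj : j = n
    · subst hi hj
      have h1 : ρ (a * m) (b * m) := hρC.2 _ _ _ (G_mem ⟨hp, rfl, rfl⟩)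
      ext y
      constructor
      · rintro (⟨h, -⟩ | ⟨-, l, hl, s, h3, h2⟩)
        · exact absurd rfl h
        · exact Or.inr ⟨rfl, l, hl, s, hρC.1.trans (hρC.1.symm h1) h3, h2⟩
      · rintro (⟨h, -⟩ | ⟨-, l, hl, s, h3, h2⟩)
        · exact absurd rfl h
        · exact Or.inr ⟨rfl, l, hl, s, hρC.1.trans h1 h3, h2⟩
    · subst hi
      exact (hcross ((j, b), a) ⟨hj, Or.inr hp⟩ m).symm
    · subst hj
      exact hcross ((i, a), b) ⟨hi, Or.inl hp⟩ m
    · have h1 : G H' (act (i, a) m) (act (j, b) m) :=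
        (G_isC H').2 _ _ _ (G_mem (Or.inl (Or.inl ⟨hp, hi, hj⟩)))
      ext y
      constructor
      · rintro (⟨-, h⟩ | ⟨h, -⟩)
        · exact Or.inl ⟨hj, e'.trans h h1⟩
        · exact absurd h hi
      · rintro (⟨-, h⟩ | ⟨h, -⟩)
        · exact Or.inl ⟨hi, e'.trans h (e'.symm h1)⟩
        · exact absurd h hj
  refine ⟨H', hH', ?_, ?_, ?_, B, hB, hBT, ?_⟩
  · intro p hp
    rcases hcases p hp with ⟨h, h1, h2⟩ | ⟨k, hk, l, hl, q, -, rfl⟩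
    · exact ⟨⟨(hT p h).1, h1⟩, (hT p h).2, h2⟩
    · exact ⟨⟨(hBT k hk).1, (hBT k hk).2.1⟩, (hBT l hl).1, (hBT l hl).2.1⟩
  · intro x y h
    refine G_le e ?_ h
    intro p hp m
    apply (G_isC H).2
    rcases hcases p hp with ⟨h, h1, h2⟩ | ⟨k, hk, l, hl, q, hq, rfl⟩
    · exact G_mem h
    · have h1 := (G_isC H).2 _ _ q.1 (hBT k hk).2.2
      have h2 := (G_isC H).2 _ _ q.2 (hBT l hl).2.2
      exact e.trans h1 (e.trans (cg_le hq) (e.symm h2))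
  · intro x y hx hy h
    have : x ∈ Q y := by
      rw [← hQ x y h]
      exact Or.inl ⟨hx, e'.refl _⟩
    rcases this with ⟨-, h⟩ | ⟨h, -⟩
    · exact h
    · exact absurd h hy
  · intro x m hx h
    have : x ∈ Q (n, m) := by
      rw [← hQ x _ h]
      exact Or.inl ⟨hx, e'.refl _⟩
    rcases this with ⟨h, -⟩ | ⟨-, k, hk, s, h1, -⟩
    · exact absurd rfl h
    · exact ⟨k, hk, s, cg_le h1⟩

theorem Inter_transfer {r r' : I × M → I × M → Prop} (hr : IsC r) {x y : I × M}
    (hr' : IsC r')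
    (h1 : ∀ u v, r' u v → r u v) (h2 : ∀ s t, r (act x s) (act y t) → r' (act x s) (act y t))
    (h : Inter r' x y) : Inter r x y := by
  obtain ⟨C, hC, hC'⟩ := h
  have mono : ∀ c w, In r' c w → In r c w := fun c w ⟨s, hs⟩ => ⟨s, h1 _ _ hs⟩
  refine ⟨C, hC, fun w => ⟨?_, ?_⟩⟩
  · rintro ⟨⟨s, hs⟩, ⟨t, ht⟩⟩
    obtain ⟨c, hc, k, hk⟩ := (hC' (act x s)).1
      ⟨⟨s, hr'.1.refl _⟩, ⟨t, h2 _ _ (hr.1.trans (hr.1.symm hs) ht)⟩⟩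
    exact ⟨c, hc, k, hr.1.trans hs (h1 _ _ hk)⟩
  · rintro ⟨c, hc, h⟩
    obtain ⟨h3, h4⟩ := (hC' c).2 ⟨c, hc, In_self hr' c⟩
    exact ⟨In_trans hr (mono _ _ h3) h, In_trans hr (mono _ _ h4) h⟩

theorem main_free (hcoh : RightCoherent M) (N : ℕ) : ∀ (T : Finset I), T.card = N →
    ∀ H : Set ((I × M) × (I × M)), H.Finite → (∀ p ∈ H, p.1.1 ∈ T ∧ p.2.1 ∈ T) →
    ∀ i ∈ T, Ann (G H) (i, 1) ∧ ∀ j ∈ T, Inter (G H) (i, 1) (j, 1) := by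
  classical
  induction N with
  | zero =>
    intro T hT H hH hp i hi
    rw [Finset.card_eq_zero] at hT
    simp [hT] at hi
  | succ N ih =>
    intro T hT H hH hp i hi
    have hAnn : Ann (G H) (i, 1) := by
      by_cases h : ∃ n ∈ T, n ≠ i
      · obtain ⟨n, hn, hni⟩ := h
        obtain ⟨H', hH', hT', hle, hge, -⟩ := elimination hcoh hH n (T : Set I) hp
        have := (ih (T.erase n) (by rw [Finset.card_erase_of_mem hn, hT]; rfl) H' hH'
          (by intro p hp; have := hT' p hp; simp at this ⊢; tauto) i
          (by simp [hi, hni.symm])).1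
        have e : (fun u v => G H (act (i, (1 : M)) u) (act (i, 1) v)) =
            (fun u v => G H' (act (i, 1) u) (act (i, 1) v)) := by
          funext u v
          exact propext ⟨hge _ _ hni.symm hni.symm, hle _ _⟩
        unfold Ann
        rw [e]
        exact this
      · push Not at h
        exact Ann_single hH fun p hp' => ⟨h _ (hp p hp').1, h _ (hp p hp').2⟩
    refine ⟨hAnn, fun j hj => ?_⟩
    by_cases hij : i = j
    · subst hij
      exact Inter_same hcoh (G_isC H) hAnn _ _
    obtain ⟨H', hH', hT', hle, hge, B, hB, hB1, hB2⟩ := elimination hcoh hH j (T : Set I) hp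
    have IH := ih (T.erase j) (by rw [Finset.card_erase_of_mem hj, hT]; rfl) H' hH'
          (by intro p hp; have := hT' p hp; simp at this ⊢; tauto)
    have hi' : i ∈ T.erase j := by simp [hi, hij]
    have e := G_equiv H
    refine FGs_union (Q := fun b w => In (G H) (i, 1) w ∧ In (G H) b.1 w) hB ?_ ?_
    · rintro ⟨⟨k, a⟩, b⟩ hb
      obtain ⟨hk, hkj, hb⟩ := hB1 _ hb
      have hk' : k ∈ T.erase j := by simpa using ⟨hkj, hk⟩
      exact Inter_transfer (G_isC H) (G_isC H') hle (fun s t => hge _ _ hij hkj)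
        (Inter_reduce hcoh (G_isC H') (IH i hi').1 (IH k hk').1 ((IH i hi').2 k hk') 1 a)
    · intro w
      constructor
      · rintro ⟨⟨s, hs⟩, ⟨t, ht⟩⟩
        have h3 := ht
        simp only [act, one_mul] at h3
        obtain ⟨b, hb, k, hk⟩ := hB2 (act (i, 1) s) t hij (e.trans (e.symm hs) h3)
        refine ⟨b, hb, ⟨s, hs⟩, k, e.trans h3 (e.trans hk (e.symm ?_))⟩
        exact (G_isC H).2 _ _ k (hB1 b hb).2.2
      · rintro ⟨b, hb, h1, ⟨s, hs⟩⟩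
        refine ⟨h1, b.2 * s, ?_⟩
        have := (G_isC H).2 _ _ s (hB1 b hb).2.2
        simp only [act, one_mul] at this ⊢
        exact e.trans hs this

theorem free_coh (hcoh : RightCoherent M) {H : Set ((I × M) × (I × M))} (hH : H.Finite)
    (x y : I × M) : Ann (G H) x ∧ Inter (G H) x y := by
  classical
  let T : Finset I := insert x.1 (insert y.1
    (hH.toFinset.image (fun p => p.1.1) ∪ hH.toFinset.image (fun p => p.2.1)))
  have hT : ∀ p ∈ H, p.1.1 ∈ T ∧ p.2.1 ∈ T := by
    intro p hp
    constructor
    · refine Finset.mem_insert_of_mem (Finset.mem_insert_of_mem (Finset.mem_union_left _ ?_))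
      exact Finset.mem_image_of_mem (fun p : (I × M) × (I × M) => p.1.1) (hH.mem_toFinset.2 hp)
    · refine Finset.mem_insert_of_mem (Finset.mem_insert_of_mem (Finset.mem_union_right _ ?_))
      exact Finset.mem_image_of_mem (fun p : (I × M) × (I × M) => p.2.1) (hH.mem_toFinset.2 hp)
  have h := main_free hcoh _ T rfl H hH hT
  have hx : x.1 ∈ T := by simp [T]
  have hy : y.1 ∈ T := by simp [T]
  exact ⟨Ann_reduce hcoh (h _ hx).1 x.2,
    Inter_reduce hcoh (G_isC H) (h _ hx).1 (h _ hy).1 ((h _ hx).2 _ hy) x.2 y.2⟩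

/-- Elements absorbed by the zero. -/
def Zr (H : Set ((I × M) × (I × M))) (K : Set (I × M)) (x : I × M) : Prop :=
  ∃ c ∈ K, In (G H) c x

theorem zero_fg (hcoh : RightCoherent M) {H : Set ((I × M) × (I × M))} (hH : H.Finite)
    {K : Set (I × M)} (hK : ∀ T : Set I, T.Finite → {c ∈ K | c.1 ∈ T}.Finite) (x : I × M) :
    ∃ D : Set M, D.Finite ∧ ∀ u, Zr H K (act x u) ↔
      ∃ d ∈ D, ∃ t, G H (act x u) (act x (d * t)) := by
  let T : Set I := insert x.1 ((fun p => p.1.1) '' H ∪ (fun p => p.2.1) '' H)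
  have hT : T.Finite := ((hH.image _).union (hH.image _)).insert _
  have hr := G_isC H
  have hTinv : ∀ u v, G H u v → (u.1 ∈ T ↔ v.1 ∈ T) := by
    intro u v h
    refine G_le (R := fun u v => (u.1 ∈ T ↔ v.1 ∈ T)) ⟨fun _ => Iff.rfl, fun h => h.symm,
      fun h h' => h.trans h'⟩ ?_ h
    intro p hp m
    exact ⟨fun _ => Or.inr (Or.inr ⟨p, hp, rfl⟩), fun _ => Or.inr (Or.inl ⟨p, hp, rfl⟩)⟩
  obtain ⟨C, hC, hC'⟩ := FGs_union (r := G H)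
    (P := fun w => ∃ c ∈ {c ∈ K | c.1 ∈ T}, In (G H) x w ∧ In (G H) c w) (hK T hT)
    (fun c _ => (free_coh hcoh hH x c).2) (fun w => Iff.rfl)
  have : ∀ c ∈ C, ∃ d, G H c (act x d) := by
    intro c hc
    obtain ⟨_, _, h, _⟩ := (hC' c).2 ⟨c, hc, In_self hr c⟩
    exact h
  choose! g hg using this
  refine ⟨g '' C, hC.image _, fun u => ?_⟩
  constructor
  · rintro ⟨c, hc, s, hs⟩
    have hcT : c.1 ∈ T := (hTinv _ _ hs).1 (Or.inl rfl)
    obtain ⟨e, he, t, ht⟩ := (hC' (act x u)).1 ⟨c, ⟨hc, hcT⟩, ⟨u, hr.1.refl _⟩, s, hs⟩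
    refine ⟨_, ⟨e, he, rfl⟩, t, hr.1.trans ht ?_⟩
    rw [← act_act]
    exact hr.2 _ _ _ (hg e he)
  · rintro ⟨_, ⟨e, he, rfl⟩, t, ht⟩
    obtain ⟨c, hc, -, h⟩ := (hC' e).2 ⟨e, he, In_self hr e⟩
    refine ⟨c, hc.1, In_trans hr h ⟨t, hr.1.trans ht ?_⟩⟩
    rw [← act_act]
    exact hr.2 _ _ _ (hr.1.symm (hg e he))

end free

theorem structure_lemma
    {Mo : Type*} [Monoid Mo] {I : Type*}
    {S : Type*} [Monoid S] (f : I × Mo × I → S) (z : S)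
    (hinj : Function.Injective f)
    (hfz : ∀ p : I × Mo × I, f p ≠ z)
    (hcover : ∀ s : S, s = 1 ∨ s = z ∨ ∃ p : I × Mo × I, f p = s)
    (hmul_eq : ∀ (i : I) (a : Mo) (j : I) (b : Mo) (l : I),
      f (i, a, j) * f (j, b, l) = f (i, a * b, l))
    (hmul_ne : ∀ (i : I) (a : Mo) (j k : I) (b : Mo) (l : I), j ≠ k →
      f (i, a, j) * f (k, b, l) = z)
    (hzmul : ∀ s : S, z * s = z ∧ s * z = z)
    (ρ : S → S → Prop) (hρ : FGRightCongruence ρ) :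
    ∃ (H0 : Set ((I × Mo) × (I × Mo))) (K : Set (I × Mo)), H0.Finite ∧
      (∀ T : Set I, T.Finite → {c ∈ K | c.1 ∈ T}.Finite) ∧
      (∀ x y j, ρ (f (x.1, x.2, j)) (f (y.1, y.2, j)) ↔ G H0 x y ∨ (Zr H0 K x ∧ Zr H0 K y)) ∧
      (∀ x j, ρ (f (x.1, x.2, j)) z ↔ Zr H0 K x) := by
  obtain ⟨H, hH, hρC, hHρ, hmin⟩ := hρ
  let g : I × Mo → I → S := fun x k => f (x.1, x.2, k)
  let e : I → S := fun k => f (k, 1, k)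
  have ginj : ∀ x y j k, g x j = g y k → x = y ∧ j = k := by
    rintro ⟨a, b⟩ ⟨c, d⟩ j k h
    have := hinj h
    simp only [Prod.mk.injEq] at this ⊢
    tauto
  have gz : ∀ x j, g x j ≠ z := fun x j => hfz _
  have gmul : ∀ x k m j, g x k * f (k, m, j) = g (act x m) j := fun x k m j => hmul_eq _ _ _ _ _
  have ge : ∀ x k, g x k * e k = g x k := fun x k => by
    have := gmul x k 1 k
    rwa [act_one] at this
  have hse : ∀ s k, s * e k = z ∨ ∃ x, s * e k = g x k := by
    intro s k
    rcases hcover s with rfl | rfl | ⟨⟨i, a, j⟩, rfl⟩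
    · exact Or.inr ⟨(k, 1), one_mul _⟩
    · exact Or.inl (hzmul _).1
    · by_cases hjk : j = k
      · subst hjk
        exact Or.inr ⟨(i, a), ge (i, a) j⟩
      · exact Or.inl (hmul_ne _ _ _ _ _ _ hjk)
  have huniq : ∀ c, c ≠ 1 → ∀ k x, c * e k = g x k → c = g x k := by
    intro c hc k x h
    rcases hcover c with rfl | rfl | ⟨⟨i, a, j⟩, rfl⟩
    · exact absurd rfl hc
    · exact absurd ((hzmul _).1.symm.trans h).symm (gz _ _)
    · by_cases hjk : j = k
      · subst hjk
        exact (ge (i, a) j).symm.trans h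
      · exact absurd ((hmul_ne _ _ _ _ _ _ hjk).symm.trans h).symm (gz _ _)
  have hone : ∀ k x, 1 * e k = g x k → x = (k, 1) := by
    intro k x h
    rw [one_mul] at h
    exact ((ginj (k, 1) x k k h).1).symm
  let H0 : Set ((I × Mo) × (I × Mo)) := ⋃ p ∈ H,
    {q | q.1 ≠ q.2 ∧ ∃ k, p.1 * e k = g q.1 k ∧ p.2 * e k = g q.2 k}
  let K : Set (I × Mo) := {x | ∃ p ∈ H, ∃ k, (p.1 * e k = g x k ∧ p.2 * e k = z) ∨
    (p.2 * e k = g x k ∧ p.1 * e k = z)}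
  have hH0 : H0.Finite := by
    refine hH.biUnion fun p _ => Set.Subsingleton.finite ?_
    rintro ⟨x, y⟩ ⟨hxy, k, h1, h2⟩ ⟨x', y'⟩ ⟨-, k', h1', h2'⟩
    simp only at hxy h1 h2 h1' h2'
    have hk : k = k' := by
      by_cases hp1 : p.1 = 1
      · by_cases hp2 : p.2 = 1
        · rw [hp1] at h1
          rw [hp2] at h2
          exact absurd ((hone _ _ h1).trans (hone _ _ h2).symm) hxy
        · exact (ginj _ _ _ _ ((huniq _ hp2 _ _ h2).symm.trans (huniq _ hp2 _ _ h2'))).2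
      · exact (ginj _ _ _ _ ((huniq _ hp1 _ _ h1).symm.trans (huniq _ hp1 _ _ h1'))).2
    subst hk
    rw [(ginj _ _ _ _ (h1.symm.trans h1')).1, (ginj _ _ _ _ (h2.symm.trans h2')).1]
  have hN : ∀ (T : Set I), T.Finite → ∀ c : S, {x : I × Mo | x.1 ∈ T ∧ ∃ k, c * e k = g x k}.Finite := by
    intro T hT c
    by_cases hc : c = 1
    · subst hc
      refine (hT.image (fun k => (k, (1 : Mo)))).subset ?_
      rintro x ⟨hx, k, h⟩
      have := hone _ _ h
      subst this
      exact ⟨k, hx, rfl⟩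
    · refine Set.Subsingleton.finite ?_
      rintro x ⟨-, k, h⟩ x' ⟨-, k', h'⟩
      exact (ginj _ _ _ _ ((huniq _ hc _ _ h).symm.trans (huniq _ hc _ _ h'))).1
  have hK : ∀ T : Set I, T.Finite → {c ∈ K | c.1 ∈ T}.Finite := by
    intro T hT
    refine (hH.biUnion (fun p _ => (hN T hT p.1).union (hN T hT p.2))).subset ?_
    rintro x ⟨⟨p, hp, k, ⟨h, -⟩ | ⟨h, -⟩⟩, hx⟩
    · exact Set.mem_biUnion hp (Or.inl ⟨hx, k, h⟩)
    · exact Set.mem_biUnion hp (Or.inr ⟨hx, k, h⟩)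
  have hr := G_isC H0
  have Zact : ∀ x m, Zr H0 K x → Zr H0 K (act x m) := fun x m ⟨c, hc, h⟩ =>
    ⟨c, hc, In_trans hr h ⟨m, hr.1.refl _⟩⟩
  have Zcongr : ∀ x y, G H0 x y → Zr H0 K x → Zr H0 K y := fun x y hxy ⟨c, hc, h⟩ =>
    ⟨c, hc, In_trans hr h ⟨1, by rw [act_one]; exact hr.1.symm hxy⟩⟩
  -- from the free act to `S`
  have back1 : ∀ x y, G H0 x y → ∀ j, ρ (g x j) (g y j) := by
    intro x y h
    refine G_le (R := fun x y => ∀ j, ρ (g x j) (g y j)) ⟨fun _ _ => hρC.1.refl _,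
      fun h j => hρC.1.symm (h j), fun h h' j => hρC.1.trans (h j) (h' j)⟩ ?_ h
    intro q hq m j
    obtain ⟨p, hp, -, k, h1, h2⟩ := Set.mem_iUnion₂.1 hq
    rw [← gmul _ k, ← gmul _ k, ← h1, ← h2]
    exact hρC.2 _ _ _ (hρC.2 _ _ _ (hHρ p hp))
  have back2 : ∀ x, Zr H0 K x → ∀ j, ρ (g x j) z := by
    rintro x ⟨c, ⟨p, hp, k, h⟩, m, hm⟩ j
    refine hρC.1.trans (back1 _ _ hm j) ?_
    have h3 := hρC.2 _ _ (f (k, m, j)) (hρC.2 _ _ (e k) (hHρ p hp))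
    rcases h with ⟨h1, h2⟩ | ⟨h1, h2⟩
    · rw [h1, h2, gmul, (hzmul _).1] at h3
      exact h3
    · rw [h1, h2, gmul, (hzmul _).1] at h3
      exact hρC.1.symm h3
  let Zs : S → Prop := fun s => s = z ∨ ∃ x j, s = g x j ∧ Zr H0 K x
  let Θ : S → S → Prop := fun s t => (Zs s ∧ Zs t) ∨
    ∃ x y j, s = g x j ∧ t = g y j ∧ G H0 x y
  have Zsg : ∀ x j, Zs (g x j) → Zr H0 K x := by
    rintro x j (h | ⟨y, k, h, hy⟩)
    · exact absurd h (gz _ _)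
    · rw [(ginj _ _ _ _ h).1]; exact hy
  have Θsymm : ∀ s t, Θ s t → Θ t s := by
    rintro s t (⟨h1, h2⟩ | ⟨x, y, j, h1, h2, h3⟩)
    · exact Or.inl ⟨h2, h1⟩
    · exact Or.inr ⟨y, x, j, h2, h1, hr.1.symm h3⟩
  have ΘZ : ∀ s t, Θ s t → Zs s → Zs t := by
    rintro s t (⟨h1, h2⟩ | ⟨x, y, j, rfl, rfl, h3⟩) h
    · exact h2
    · exact Or.inr ⟨y, j, rfl, Zcongr _ _ h3 (Zsg _ _ h)⟩
  have Θtrans : ∀ s t u, Θ s t → Θ t u → Θ s u := by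
    intro s t u h1 h2
    rcases h1 with ⟨h1, h1'⟩ | ⟨x, y, j, h3, h4, h5⟩
    · exact Or.inl ⟨h1, ΘZ _ _ h2 h1'⟩
    · rcases h2 with ⟨h2, h2'⟩ | ⟨x', y', j', h3', h4', h5'⟩
      · exact Or.inl ⟨ΘZ t s (Or.inr ⟨y, x, j, h4, h3, hr.1.symm h5⟩) h2, h2'⟩
      · obtain ⟨rfl, rfl⟩ := ginj _ _ _ _ (h4.symm.trans h3')
        exact Or.inr ⟨x, y', j, h3, h4', hr.1.trans h5 h5'⟩
  have hzz : Θ z z := Or.inl ⟨Or.inl rfl, Or.inl rfl⟩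
  have Zsmul : ∀ s k b j, Zs s → Zs (s * f (k, b, j)) := by
    rintro s k b j (rfl | ⟨x, l, rfl, h⟩)
    · exact Or.inl (hzmul _).1
    · by_cases hlk : l = k
      · subst hlk
        exact Or.inr ⟨_, j, gmul _ _ _ _, Zact _ _ h⟩
      · exact Or.inl (hmul_ne _ _ _ _ _ _ hlk)
  have Θmul : ∀ s t k b j, Θ s t → Θ (s * f (k, b, j)) (t * f (k, b, j)) := by
    rintro s t k b j (⟨h1, h2⟩ | ⟨x, y, l, rfl, rfl, h3⟩)
    · exact Or.inl ⟨Zsmul _ _ _ _ h1, Zsmul _ _ _ _ h2⟩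
    · by_cases hlk : l = k
      · subst hlk
        exact Or.inr ⟨_, _, j, gmul _ _ _ _, gmul _ _ _ _, hr.2 _ _ _ h3⟩
      · exact Or.inl ⟨Or.inl (hmul_ne _ _ _ _ _ _ hlk), Or.inl (hmul_ne _ _ _ _ _ _ hlk)⟩
  have fwd : ∀ s t, ρ s t → ∀ j, Θ (s * e j) (t * e j) := by
    refine fun s t h => hmin (fun s t => ∀ j, Θ (s * e j) (t * e j)) ⟨⟨?_, ?_, ?_⟩, ?_⟩ ?_ s t h
    · intro s j
      rcases hse s j with h | ⟨x, h⟩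
      · rw [h]; exact hzz
      · exact Or.inr ⟨x, x, j, h, h, hr.1.refl _⟩
    · exact fun h j => Θsymm _ _ (h j)
    · exact fun h h' j => Θtrans _ _ _ (h j) (h' j)
    · intro s t c h j
      rw [mul_assoc, mul_assoc]
      rcases hse c j with h' | ⟨⟨k, b⟩, h'⟩
      · rw [h', (hzmul s).2, (hzmul t).2]; exact hzz
      · have h4 : c * e j = e k * f (k, b, j) := by
          rw [h']
          change f (k, b, j) = f (k, 1, k) * f (k, b, j)
          rw [hmul_eq, one_mul]
        rw [h4, ← mul_assoc, ← mul_assoc]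
        exact Θmul _ _ _ _ _ (h k)
    · intro p hp k
      rcases hse p.1 k with h1 | ⟨x, h1⟩ <;> rcases hse p.2 k with h2 | ⟨y, h2⟩
      · rw [h1, h2]; exact hzz
      · exact Or.inl ⟨Or.inl h1, Or.inr ⟨y, k, h2, y, ⟨p, hp, k, Or.inr ⟨h2, h1⟩⟩, In_self hr y⟩⟩
      · exact Or.inl ⟨Or.inr ⟨x, k, h1, x, ⟨p, hp, k, Or.inl ⟨h1, h2⟩⟩, In_self hr x⟩, Or.inl h2⟩
      · refine Or.inr ⟨x, y, k, h1, h2, ?_⟩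
        by_cases hxy : x = y
        · rw [hxy]; exact hr.1.refl _
        · exact G_mem (Set.mem_biUnion hp ⟨hxy, k, h1, h2⟩)
  refine ⟨H0, K, hH0, hK, fun x y j => ⟨fun h => ?_, ?_⟩, fun x j => ⟨fun h => ?_, fun h => back2 x h j⟩⟩
  · have h' : Θ (g x j * e j) (g y j * e j) := fwd _ _ h j
    rw [ge, ge] at h'
    rcases h' with ⟨h1, h2⟩ | ⟨x', y', j', h1, h2, h3⟩
    · exact Or.inr ⟨Zsg _ _ h1, Zsg _ _ h2⟩
    · rw [(ginj _ _ _ _ h1).1, (ginj _ _ _ _ h2).1]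
      exact Or.inl h3
  · rintro (h | ⟨h1, h2⟩)
    · exact back1 _ _ h j
    · exact hρC.1.trans (back2 _ h1 j) (hρC.1.symm (back2 _ h2 j))
  · have h' : Θ (g x j * e j) (z * e j) := fwd _ _ h j
    rw [ge, (hzmul _).1] at h'
    exact Zsg _ _ (ΘZ _ _ (Θsymm _ _ h') (Or.inl rfl))

end BrandtCoh

open BrandtCoh

theorem stmt14
    {Mo : Type*} [Monoid Mo] {I : Type*} [Nonempty I]
    {S : Type*} [Monoid S] (f : I × Mo × I → S) (z : S)
    (hinj : Function.Injective f)
    (hfz : ∀ p : I × Mo × I, f p ≠ z) (hf1 : ∀ p : I × Mo × I, f p ≠ 1) (hz1 : z ≠ 1)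
    (hcover : ∀ s : S, s = 1 ∨ s = z ∨ ∃ p : I × Mo × I, f p = s)
    (hmul_eq : ∀ (i : I) (a : Mo) (j : I) (b : Mo) (l : I),
      f (i, a, j) * f (j, b, l) = f (i, a * b, l))
    (hmul_ne : ∀ (i : I) (a : Mo) (j k : I) (b : Mo) (l : I), j ≠ k →
      f (i, a, j) * f (k, b, l) = z)
    (hzmul : ∀ s : S, z * s = z ∧ s * z = z)
    (hcoh : RightCoherent Mo) :
    RightCoherent S := by
  classical
  intro ρ hρ α β
  obtain ⟨H0, K, hH0, hK, L1, L2⟩ :=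
    structure_lemma f z hinj hfz hcover hmul_eq hmul_ne hzmul ρ hρ
  have hρC : IsRightCongruence ρ := by
    obtain ⟨_, -, h, -⟩ := hρ
    exact h
  have hr := G_isC H0
  have hzl : ∀ s, z * s = z := fun s => (hzmul s).1
  have hzr : ∀ s, s * z = z := fun s => (hzmul s).2
  have eleft : ∀ j s, f (j, 1, j) * s = z ∨ ∃ m l, f (j, 1, j) * s = f (j, m, l) := by
    intro j s
    rcases hcover s with rfl | rfl | ⟨⟨k, b, l⟩, rfl⟩
    · exact Or.inr ⟨1, j, mul_one _⟩
    · exact Or.inl (hzr _)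
    · by_cases hjk : j = k
      · subst hjk
        exact Or.inr ⟨b, l, by rw [hmul_eq, one_mul]⟩
      · exact Or.inl (hmul_ne _ _ _ _ _ _ hjk)
  have absorb : ∀ i a j s, f (i, a, j) * s = f (i, a, j) * (f (j, 1, j) * s) := by
    intro i a j s
    rw [← mul_assoc, hmul_eq, mul_one]
  have hdiff : ∀ i a j k b l, j ≠ l → ρ (f (i, a, j)) (f (k, b, l)) → ρ (f (i, a, j)) z := by
    intro i a j k b l hjl h
    have := hρC.2 _ _ (f (j, 1, j)) h
    rwa [hmul_eq, mul_one, hmul_ne _ _ _ _ _ _ hjl.symm] at this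
  constructor
  · rcases hcover α with rfl | rfl | ⟨⟨i, a, j⟩, rfl⟩
    · refine ⟨{β}, ?_⟩
      ext w
      simp only [Set.mem_setOf_eq, Finset.mem_singleton, Set.iUnion_iUnion_eq_left]
      exact ⟨fun h => h.2, fun h => ⟨⟨w, by rw [one_mul]; exact hρC.1.refl _⟩, h⟩⟩
    · refine ⟨{α}, ?_⟩
      ext w
      simp only [Set.mem_setOf_eq, Finset.mem_singleton, Set.iUnion_iUnion_eq_left]
      exact ⟨fun h => h.1, fun ⟨s, hs⟩ => ⟨⟨s, hs⟩, α, by rw [hzl] at hs; rw [hzr]; exact hs⟩⟩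
    rcases hcover β with rfl | rfl | ⟨⟨k, b, l⟩, rfl⟩
    · refine ⟨{f (i, a, j)}, ?_⟩
      ext w
      simp only [Set.mem_setOf_eq, Finset.mem_singleton, Set.iUnion_iUnion_eq_left]
      exact ⟨fun h => h.1, fun h => ⟨h, ⟨w, by rw [one_mul]; exact hρC.1.refl _⟩⟩⟩
    · refine ⟨{β}, ?_⟩
      ext w
      simp only [Set.mem_setOf_eq, Finset.mem_singleton, Set.iUnion_iUnion_eq_left]
      exact ⟨fun h => h.2, fun ⟨s, hs⟩ => ⟨⟨β, by rw [hzl] at hs; rw [hzr]; exact hs⟩, ⟨s, hs⟩⟩⟩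
    obtain ⟨C, hC, hC'⟩ := (free_coh hcoh hH0 (i, a) (k, b)).2
    refine ⟨insert z (hC.toFinset.image (fun c => f (c.1, c.2, j))), ?_⟩
    ext w
    simp only [Set.mem_setOf_eq, Set.mem_iUnion, Finset.mem_insert, Finset.mem_image,
      Set.Finite.mem_toFinset, exists_prop]
    constructor
    · rintro ⟨⟨s, hs⟩, ⟨t, ht⟩⟩
      have zcase : ρ w z → ∃ c, (c = z ∨ ∃ c' ∈ C, f (c'.1, c'.2, j) = c) ∧ ∃ s, ρ w (c * s) :=
        fun h => ⟨z, Or.inl rfl, 1, by rw [mul_one]; exact h⟩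
      rw [absorb] at hs ht
      rcases eleft j s with h1 | ⟨m, p, h1⟩
      · rw [h1, hzr] at hs; exact zcase hs
      rcases eleft l t with h2 | ⟨n, q, h2⟩
      · rw [h2, hzr] at ht; exact zcase ht
      rw [h1, hmul_eq] at hs
      rw [h2, hmul_eq] at ht
      have hst := hρC.1.trans (hρC.1.symm hs) ht
      by_cases hpq : p = q
      · subst hpq
        rcases (L1 (i, a * m) (k, b * n) p).1 hst with h | ⟨h, -⟩
        · obtain ⟨c, hc, u, hu⟩ := (hC' (i, a * m)).1 ⟨⟨m, hr.1.refl _⟩, ⟨n, h⟩⟩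
          refine ⟨_, Or.inr ⟨c, hc, rfl⟩, f (j, u, p), ?_⟩
          rw [hmul_eq]
          exact hρC.1.trans hs ((L1 (i, a * m) (act c u) p).2 (Or.inl hu))
        · exact zcase (hρC.1.trans hs ((L2 (i, a * m) p).2 h))
      · exact zcase (hρC.1.trans hs (hdiff _ _ _ _ _ _ hpq hst))
    · rintro ⟨c, rfl | ⟨c', hc', rfl⟩, s, hs⟩
      · rw [hzl] at hs
        exact ⟨⟨c, by rw [hzr]; exact hs⟩, ⟨c, by rw [hzr]; exact hs⟩⟩
      · obtain ⟨⟨u, hu⟩, ⟨v, hv⟩⟩ := (hC' c').2 ⟨c', hc', In_self hr c'⟩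
        refine ⟨⟨f (j, u, j) * s, ?_⟩, ⟨f (l, v, j) * s, ?_⟩⟩
        · rw [← mul_assoc, hmul_eq]
          exact hρC.1.trans hs (hρC.2 _ _ _ ((L1 c' (act (i, a) u) j).2 (Or.inl hu)))
        · rw [← mul_assoc, hmul_eq]
          exact hρC.1.trans hs (hρC.2 _ _ _ ((L1 c' (act (k, b) v) j).2 (Or.inl hv)))
  · have hannC : IsRightCongruence (fun u v => ρ (α * u) (α * v)) := by
      refine ⟨⟨fun _ => hρC.1.refl _, fun h => hρC.1.symm h, fun h h' => hρC.1.trans h h'⟩, ?_⟩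
      intro u v c h
      rw [← mul_assoc, ← mul_assoc]
      exact hρC.2 _ _ _ h
    rcases hcover α with rfl | rfl | ⟨⟨i, a, j⟩, rfl⟩
    · simpa using hρ
    · refine ⟨{(1, α)}, Set.finite_singleton _, hannC, ?_, ?_⟩
      · intro p _
        simp only [hzl]
        exact hρC.1.refl _
      · intro r' hr' h x y _
        have h1 : ∀ x, r' x α := by
          intro x
          have := hr'.2 _ _ x (h (1, α) rfl)
          rwa [one_mul, hzl] at this
        exact hr'.1.trans (h1 x) (hr'.1.symm (h1 y))
    · obtain ⟨A, hA, -, hA1, hA2⟩ := (free_coh hcoh hH0 (i, a) (i, a)).1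
      obtain ⟨D, hD, hD'⟩ := zero_fg hcoh hH0 hK (i, a)
      refine ⟨{(1, f (j, 1, j))} ∪ (fun q : Mo × Mo => (f (j, q.1, j), f (j, q.2, j))) '' A ∪
        (fun d => (f (j, d, j), z)) '' D, ?_, hannC, ?_, ?_⟩
      · exact ((Set.finite_singleton _).union (hA.image _)).union (hD.image _)
      · rintro p ((rfl | ⟨q, hq, rfl⟩) | ⟨d, hd, rfl⟩)
        · simp only [hmul_eq, mul_one]
          exact hρC.1.refl _
        · simp only [hmul_eq]
          exact (L1 (act (i, a) q.1) (act (i, a) q.2) j).2 (Or.inl (hA1 q hq))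
        · simp only [hmul_eq, hzr]
          exact (L2 (act (i, a) d) j).2 ((hD' d).2 ⟨d, hd, 1, by rw [mul_one]; exact hr.1.refl _⟩)
      · intro r' hr' hG u v huv
        have h1 : ∀ w, r' w (f (j, 1, j) * w) := by
          intro w
          have := hr'.2 _ _ w (hG (1, f (j, 1, j)) (Or.inl (Or.inl rfl)))
          rwa [one_mul] at this
        have hAnn : ∀ m n, G H0 (act (i, a) m) (act (i, a) n) → ∀ l,
            r' (f (j, m, l)) (f (j, n, l)) := by
          intro m n h
          refine hA2 (fun m n => ∀ l, r' (f (j, m, l)) (f (j, n, l))) ⟨⟨fun _ _ => hr'.1.refl _,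
            fun h l => hr'.1.symm (h l), fun h h' l => hr'.1.trans (h l) (h' l)⟩, ?_⟩ ?_ m n h
          · intro m n c h l
            have := hr'.2 _ _ (f (j, c, l)) (h j)
            rwa [hmul_eq, hmul_eq] at this
          · intro q hq l
            have := hr'.2 _ _ (f (j, 1, l)) (hG (f (j, q.1, j), f (j, q.2, j))
              (Or.inl (Or.inr ⟨q, hq, rfl⟩)))
            simpa only [hmul_eq, mul_one] using this
        have hZ : ∀ m l, Zr H0 K (act (i, a) m) → r' (f (j, m, l)) z := by
          intro m l h
          obtain ⟨d, hd, t, ht⟩ := (hD' m).1 h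
          refine hr'.1.trans (hAnn _ _ ht l) ?_
          have := hr'.2 _ _ (f (j, t, l)) (hG (f (j, d, j), z) (Or.inr ⟨d, hd, rfl⟩))
          rwa [hmul_eq, hzl] at this
        have hZ' : ∀ m l, ρ (f (i, a * m, l)) z → r' (f (j, m, l)) z := fun m l h =>
          hZ m l ((L2 (act (i, a) m) l).1 h)
        refine hr'.1.trans (h1 u) (hr'.1.trans ?_ (hr'.1.symm (h1 v)))
        simp only [absorb i a j u, absorb i a j v] at huv
        rcases eleft j u with h2 | ⟨m, p, h2⟩ <;> rcases eleft j v with h3 | ⟨n, q, h3⟩ <;>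
          rw [h2, h3] at huv ⊢
        · exact hr'.1.refl _
        · rw [hzr, hmul_eq] at huv
          exact hr'.1.symm (hZ' _ _ (hρC.1.symm huv))
        · rw [hzr, hmul_eq] at huv
          exact hZ' _ _ huv
        · rw [hmul_eq, hmul_eq] at huv
          by_cases hpq : p = q
          · subst hpq
            rcases (L1 (act (i, a) m) (act (i, a) n) p).1 huv with h | ⟨h, h'⟩
            · exact hAnn _ _ h p
            · exact hr'.1.trans (hZ _ _ h) (hr'.1.symm (hZ _ _ h'))
          · exact hr'.1.trans (hZ' _ _ (hdiff _ _ _ _ _ _ hpq huv))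
              (hr'.1.symm (hZ' _ _ (hdiff _ _ _ _ _ _ (Ne.symm hpq) (hρC.1.symm huv))))
end

section
/- Let M be a monoid and let M⁰ denote the monoid obtained from M by adjoining a new zero element. Then M is right coherent if and only if M⁰ is right coherent. -/
/-- The right congruence generated by a set. -/
def rcGen {M : Type*} [Monoid M] (H : Set (M × M)) (x y : M) : Prop :=
  ∀ r' : M → M → Prop, IsRightCongruence r' → (∀ p ∈ H, r' p.1 p.2) → r' x y

theorem rcGen_spec {M : Type*} [Monoid M] (H : Set (M × M)) : RCongGenBy H (rcGen H) := by
  refine ⟨⟨⟨?_, ?_, ?_⟩, ?_⟩, ?_, ?_⟩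
  · intro x r' h _
    exact h.1.refl x
  · intro x y hxy r' h h2
    exact h.1.symm (hxy r' h h2)
  · intro x y z hxy hyz r' h h2
    exact h.1.trans (hxy r' h h2) (hyz r' h h2)
  · intro a b c hab r' h h2
    exact h.2 _ _ _ (hab r' h h2)
  · intro p hp r' h h2
    exact h2 p hp
  · intro r' h h2 x y hxy
    exact hxy r' h h2

/-- Extension of a relation by zero. -/
def zext {M : Type*} (r : M → M → Prop) (x y : WithZero M) : Prop :=
  (x = 0 ∧ y = 0) ∨ ∃ a b : M, x = a ∧ y = b ∧ r a b

theorem zext_coe {M : Type*} (r : M → M → Prop) (x y : M) :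
    zext r (x : WithZero M) y ↔ r x y := by
  constructor
  · rintro (⟨h, _⟩ | ⟨a, b, h1, h2, h⟩)
    · exact absurd h WithZero.coe_ne_zero
    · rw [WithZero.coe_inj] at h1 h2
      subst h1 h2
      exact h
  · intro h
    exact Or.inr ⟨x, y, rfl, rfl, h⟩

theorem not_zext_coe_zero {M : Type*} (r : M → M → Prop) (x : M) :
    ¬ zext r (x : WithZero M) 0 := by
  rintro (⟨h, _⟩ | ⟨a, b, h1, h2, h⟩)
  · exact WithZero.coe_ne_zero h
  · exact WithZero.coe_ne_zero h2.symm

theorem zext_cong {M : Type*} [Monoid M] {r : M → M → Prop} (h : IsRightCongruence r) :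
    IsRightCongruence (zext r) := by
  refine ⟨⟨?_, ?_, ?_⟩, ?_⟩
  · intro x
    induction x with
    | zero => exact Or.inl ⟨rfl, rfl⟩
    | coe x => exact (zext_coe r x x).2 (h.1.refl x)
  · rintro x y (⟨rfl, rfl⟩ | ⟨a, b, rfl, rfl, hab⟩)
    · exact Or.inl ⟨rfl, rfl⟩
    · exact Or.inr ⟨b, a, rfl, rfl, h.1.symm hab⟩
  · rintro x y z (⟨rfl, rfl⟩ | ⟨a, b, rfl, rfl, hab⟩) hyz
    · exact hyz
    · induction z with
      | zero => exact absurd hyz (not_zext_coe_zero r b)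
      | coe z => exact (zext_coe r _ _).2 (h.1.trans hab ((zext_coe r _ _).1 hyz))
  · intro x y c hxy
    induction c with
    | zero => exact Or.inl ⟨mul_zero _, mul_zero _⟩
    | coe c =>
      obtain (⟨rfl, rfl⟩ | ⟨a, b, rfl, rfl, hab⟩) := hxy
      · exact Or.inl ⟨zero_mul _, zero_mul _⟩
      · exact Or.inr ⟨a * c, b * c, by simp, by simp, h.2 _ _ _ hab⟩

/-- Restriction of a right congruence to `M`. -/
theorem res_cong {M : Type*} [Monoid M] {r : WithZero M → WithZero M → Prop}
    (h : IsRightCongruence r) : IsRightCongruence (fun x y : M => r x y) := by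
  refine ⟨⟨fun x => h.1.refl _, fun h1 => h.1.symm h1, fun h1 h2 => h.1.trans h1 h2⟩, ?_⟩
  intro a b c hab
  have := h.2 _ _ (c : WithZero M) hab
  simpa using this

theorem back {M : Type*} [Monoid M] (hM : RightCoherent (WithZero M)) : RightCoherent M := by
  rintro r ⟨H, hH, hr, hHr, hmin⟩ a b
  have hfg : FGRightCongruence (zext r) := by
    refine ⟨(fun p : M × M => ((p.1 : WithZero M), (p.2 : WithZero M))) '' H, hH.image _,
      zext_cong hr, ?_, ?_⟩
    · rintro _ ⟨p, hp, rfl⟩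
      exact (zext_coe r _ _).2 (hHr p hp)
    · rintro r' hr' hHr' x y (⟨rfl, rfl⟩ | ⟨a, b, rfl, rfl, hab⟩)
      · exact hr'.1.refl _
      · exact hmin _ (res_cong hr') (fun p hp => hHr' _ ⟨p, hp, rfl⟩) a b hab
  obtain ⟨⟨C, hC⟩, K, hK, hKr, hKK, hKmin⟩ := hM _ hfg a b
  have key : ∀ (x c : M), (∃ s : WithZero M, zext r x (c * s)) ↔ ∃ s : M, r x (c * s) := by
    intro x c
    constructor
    · rintro ⟨s, hs⟩
      induction s with
      | zero => exact absurd (by simpa using hs) (not_zext_coe_zero r x)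
      | coe s => exact ⟨s, (zext_coe r _ _).1 (by simpa using hs)⟩
    · rintro ⟨s, hs⟩
      exact ⟨s, by simpa using (zext_coe r _ _).2 hs⟩
  constructor
  · have hfin : {c : M | (c : WithZero M) ∈ C}.Finite :=
      C.finite_toSet.preimage (WithZero.coe_injective.injOn)
    refine ⟨hfin.toFinset, ?_⟩
    ext x
    have := Set.ext_iff.1 hC (x : WithZero M)
    simp only [Set.mem_setOf_eq, key, Set.mem_iUnion, exists_prop] at this
    simp only [Set.mem_setOf_eq, Set.mem_iUnion, exists_prop, Set.Finite.mem_toFinset, this]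
    constructor
    · rintro ⟨c, hc, hs⟩
      induction c with
      | zero =>
        obtain ⟨s, hs⟩ := hs
        exact absurd (by simpa using hs) (not_zext_coe_zero r x)
      | coe c => exact ⟨c, hc, (key x c).1 hs⟩
    · rintro ⟨c, hc, hs⟩
      exact ⟨c, hc, (key x c).2 hs⟩
  · have hann : IsRightCongruence (fun u v : M => r (a * u) (a * v)) := by
      refine ⟨⟨fun x => hr.1.refl _, fun h => hr.1.symm h, fun h h' => hr.1.trans h h'⟩, ?_⟩
      intro u v c h
      have := hr.2 _ _ c h
      simpa only [mul_assoc] using this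
    refine ⟨{p : M × M | ((p.1 : WithZero M), (p.2 : WithZero M)) ∈ K}, ?_, hann, ?_, ?_⟩
    · refine hK.preimage (f := fun p : M × M => ((p.1 : WithZero M), (p.2 : WithZero M))) ?_
      rintro ⟨p1, p2⟩ _ ⟨q1, q2⟩ _ h
      simpa using h
    · intro p hp
      have := hKK _ hp
      simp only [← WithZero.coe_mul] at this
      exact (zext_coe r _ _).1 this
    · intro r' hr' hHr' x y hxy
      refine (zext_coe r' _ _).1 (hKmin (zext r') (zext_cong hr') ?_ x y ?_)
      · rintro ⟨p, q⟩ hp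
        have := hKK _ hp
        induction p with
        | zero =>
          induction q with
          | zero => exact Or.inl ⟨rfl, rfl⟩
          | coe q =>
            refine absurd ((zext_cong hr).1.symm (by simpa only [mul_zero, ← WithZero.coe_mul] using this)) (not_zext_coe_zero r (a * q))
        | coe p =>
          induction q with
          | zero =>
            refine absurd (by simpa only [mul_zero, ← WithZero.coe_mul] using this) (not_zext_coe_zero r (a * p))
          | coe q => exact (zext_coe r' _ _).2 (hHr' (p, q) hp)
      · simp only [← WithZero.coe_mul]
        exact (zext_coe r _ _).2 hxy

theorem struct {M : Type*} [Monoid M] {r : WithZero M → WithZero M → Prop}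
    (h : FGRightCongruence r) :
    ∃ (σ : M → M → Prop) (W : Set M), FGRightCongruence σ ∧ W.Finite ∧
      (∀ x y : M, σ x y → r x y) ∧ (∀ w ∈ W, r (w : WithZero M) 0) ∧
      (∀ x : M, r x 0 → ∃ w ∈ W, ∃ s, σ x (w * s)) ∧
      (∀ x y : M, r x y → σ x y ∨ (r x 0 ∧ r y 0)) := by
  obtain ⟨H, hH, hr, hHr, hmin⟩ := h
  set HM : Set (M × M) := {p : M × M | ((p.1 : WithZero M), (p.2 : WithZero M)) ∈ H} with hHM
  have hHMf : HM.Finite := by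
    refine hH.preimage (f := fun p : M × M => ((p.1 : WithZero M), (p.2 : WithZero M))) ?_
    rintro ⟨p1, p2⟩ _ ⟨q1, q2⟩ _ h
    simpa using h
  obtain ⟨hσ, hHσ, hσmin⟩ := rcGen_spec HM
  set σ := rcGen HM
  set W : Set M := {w : M | ((w : WithZero M), (0 : WithZero M)) ∈ H} ∪
    {w : M | ((0 : WithZero M), (w : WithZero M)) ∈ H} with hW
  have hWf : W.Finite := by
    apply Set.Finite.union
    · refine hH.preimage (f := fun w : M => ((w : WithZero M), (0 : WithZero M))) ?_
      intro p _ q _ h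
      simpa using h
    · refine hH.preimage (f := fun w : M => ((0 : WithZero M), (w : WithZero M))) ?_
      intro p _ q _ h
      simpa using h
  have hC : ∀ x y : M, σ x y → r x y :=
    hσmin _ (res_cong hr) (fun p hp => hHr _ hp)
  have hWr : ∀ w ∈ W, r (w : WithZero M) 0 := by
    rintro w (hw | hw)
    · exact hHr _ hw
    · exact hr.1.symm (hHr _ hw)
  let Z : WithZero M → Prop := fun x => ∀ m : M, x = m → ∃ w ∈ W, ∃ s, σ m (w * s)
  have hZ0 : Z 0 := fun m hm => absurd hm.symm WithZero.coe_ne_zero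
  have hZσ : ∀ x y : M, σ x y → Z x → Z y := by
    intro x y hxy hx m hm
    rw [WithZero.coe_inj] at hm
    subst hm
    obtain ⟨w, hw, s, hs⟩ := hx x rfl
    exact ⟨w, hw, s, hσ.1.trans (hσ.1.symm hxy) hs⟩
  have hZmul : ∀ x c, Z x → Z (x * c) := by
    intro x c hx
    induction x with
    | zero => simpa using hZ0
    | coe x =>
      induction c with
      | zero => simpa using hZ0
      | coe c =>
        intro m hm
        rw [← WithZero.coe_mul, WithZero.coe_inj] at hm
        subst hm
        obtain ⟨w, hw, s, hs⟩ := hx x rfl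
        exact ⟨w, hw, s * c, by simpa only [mul_assoc] using hσ.2 _ _ c hs⟩
  have hZr : ∀ x, Z x → r x 0 := by
    intro x hx
    induction x with
    | zero => exact hr.1.refl _
    | coe x =>
      obtain ⟨w, hw, s, hs⟩ := hx x rfl
      have h1 := hC _ _ hs
      have h2 := hr.2 _ _ (s : WithZero M) (hWr w hw)
      rw [zero_mul, ← WithZero.coe_mul] at h2
      exact hr.1.trans h1 h2
  have hWZ : ∀ w ∈ W, Z w := by
    intro w hw m hm
    rw [WithZero.coe_inj] at hm
    subst hm
    exact ⟨w, hw, 1, by simpa using hσ.1.refl w⟩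
  let R : WithZero M → WithZero M → Prop := fun x y => (Z x ∧ Z y) ∨ zext σ x y
  have hzZ : ∀ x y, zext σ x y → Z x → Z y := by
    rintro x y (⟨rfl, rfl⟩ | ⟨a, b, rfl, rfl, hab⟩) h
    · exact h
    · exact hZσ _ _ hab h
  have hze := zext_cong hσ
  have hR : IsRightCongruence R := by
    refine ⟨⟨fun x => Or.inr (hze.1.refl x), ?_, ?_⟩, ?_⟩
    · rintro x y (h | h)
      · exact Or.inl h.symm
      · exact Or.inr (hze.1.symm h)
    · rintro x y z (h | h) (h' | h')
      · exact Or.inl ⟨h.1, h'.2⟩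
      · exact Or.inl ⟨h.1, hzZ _ _ h' h.2⟩
      · exact Or.inl ⟨hzZ _ _ (hze.1.symm h) h'.1, h'.2⟩
      · exact Or.inr (hze.1.trans h h')
    · rintro x y c (h | h)
      · exact Or.inl ⟨hZmul _ _ h.1, hZmul _ _ h.2⟩
      · exact Or.inr (hze.2 _ _ _ h)
  have hrR : ∀ x y, r x y → R x y := by
    refine hmin R hR ?_
    rintro ⟨p, q⟩ hp
    induction p with
    | zero =>
      induction q with
      | zero => exact Or.inl ⟨hZ0, hZ0⟩
      | coe q => exact Or.inl ⟨hZ0, hWZ q (Or.inr hp)⟩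
    | coe p =>
      induction q with
      | zero => exact Or.inl ⟨hWZ p (Or.inl hp), hZ0⟩
      | coe q => exact Or.inr ((zext_coe σ _ _).2 (hHσ (p, q) hp))
  refine ⟨σ, W, ⟨HM, hHMf, hσ, hHσ, hσmin⟩, hWf, hC, hWr, ?_, ?_⟩
  · intro x hx
    rcases hrR _ _ hx with h | h
    · exact h.1 x rfl
    · exact absurd h (not_zext_coe_zero σ x)
  · intro x y hxy
    rcases hrR _ _ hxy with h | h
    · exact Or.inr ⟨hZr _ h.1, hZr _ h.2⟩
    · exact Or.inl ((zext_coe σ _ _).1 h)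

theorem forth {M : Type*} [Monoid M] (hM : RightCoherent M) : RightCoherent (WithZero M) := by
  intro r hfg a b
  obtain ⟨σ, W, hσfg, hWf, hC, hWr, hA, hB⟩ := struct hfg
  have hr : IsRightCongruence r := by
    obtain ⟨H, hH, hr, _⟩ := hfg
    exact hr
  have hσ : IsRightCongruence σ := by
    obtain ⟨H, hH, hr, _⟩ := hσfg
    exact hr
  have hann : IsRightCongruence (fun u v : WithZero M => r (a * u) (a * v)) := by
    refine ⟨⟨fun x => hr.1.refl _, fun h => hr.1.symm h, fun h h' => hr.1.trans h h'⟩, ?_⟩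
    intro u v c h
    have := hr.2 _ _ c h
    simpa only [mul_assoc] using this
  constructor
  · by_cases hab : a = 0 ∨ b = 0
    · refine ⟨{0}, ?_⟩
      ext x
      simp only [Set.mem_setOf_eq, Finset.mem_singleton, Set.iUnion_iUnion_eq_left, zero_mul,
        exists_const]
      constructor
      · rintro ⟨⟨s, hs⟩, ⟨t, ht⟩⟩
        rcases hab with rfl | rfl
        · simpa using hs
        · simpa using ht
      · intro h
        exact ⟨⟨0, by simpa using h⟩, ⟨0, by simpa using h⟩⟩
    · push Not at hab
      obtain ⟨a, rfl⟩ := WithZero.ne_zero_iff_exists.1 hab.1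
      obtain ⟨b, rfl⟩ := WithZero.ne_zero_iff_exists.1 hab.2
      obtain ⟨⟨C, hCC⟩, _⟩ := hM σ hσfg a b
      classical
      refine ⟨insert 0 (C.image (fun c : M => (c : WithZero M))), ?_⟩
      ext x
      simp only [Set.mem_setOf_eq, Set.mem_iUnion, exists_prop, Finset.mem_insert,
        Finset.mem_image]
      constructor
      · rintro ⟨⟨s, hs⟩, ⟨t, ht⟩⟩
        by_cases hx : r x 0
        · exact ⟨0, Or.inl rfl, 0, by simpa using hx⟩
        induction x with
        | zero => exact absurd (hr.1.refl _) hx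
        | coe x =>
          have key : ∀ (c : M) (s : WithZero M), r x (c * s) → ∃ s : M, σ x (c * s) := by
            intro c s hs
            induction s with
            | zero => exact absurd (by simpa using hs) hx
            | coe s =>
              rw [← WithZero.coe_mul] at hs
              rcases hB _ _ hs with h | h
              · exact ⟨s, h⟩
              · exact absurd h.1 hx
          have hm := (Set.ext_iff.1 hCC x).1 ⟨key a s hs, key b t ht⟩
          simp only [Set.mem_setOf_eq, Set.mem_iUnion, exists_prop] at hm
          obtain ⟨c, hc, s, hs⟩ := hm
          exact ⟨c, Or.inr ⟨c, hc, rfl⟩, s, by simpa using hC _ _ hs⟩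
      · rintro ⟨c, rfl | ⟨c, hc, rfl⟩, s, hs⟩
        · exact ⟨⟨0, by simpa using hs⟩, ⟨0, by simpa using hs⟩⟩
        · have hm := (Set.ext_iff.1 hCC c).2 (by
            simp only [Set.mem_setOf_eq, Set.mem_iUnion, exists_prop]
            exact ⟨c, hc, 1, by simpa using hσ.1.refl c⟩)
          obtain ⟨⟨u, hu⟩, ⟨v, hv⟩⟩ := hm
          have hu' := hr.1.trans hs (hr.2 _ _ s (hC _ _ hu))
          have hv' := hr.1.trans hs (hr.2 _ _ s (hC _ _ hv))
          rw [WithZero.coe_mul, mul_assoc] at hu' hv'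
          exact ⟨⟨_, hu'⟩, ⟨_, hv'⟩⟩
  · by_cases ha : a = 0
    · subst ha
      refine ⟨{(1, 0)}, Set.finite_singleton _, hann, ?_, ?_⟩
      · intro p _
        simpa using hr.1.refl 0
      · intro r' hr' h x y _
        have h1 : r' 1 0 := h (1, 0) rfl
        have hx : ∀ x, r' x 0 := fun x => by simpa using hr'.2 _ _ x h1
        exact hr'.1.trans (hx x) (hr'.1.symm (hx y))
    · obtain ⟨a, rfl⟩ := WithZero.ne_zero_iff_exists.1 ha
      have hD : ∀ w : M, ∃ D : Set M, D.Finite ∧ (∀ d ∈ D, ∃ t, σ (a * d) (w * t)) ∧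
          ∀ u, (∃ t, σ (a * u) (w * t)) → ∃ d ∈ D, ∃ s, σ (a * u) (a * (d * s)) := by
        intro w
        obtain ⟨⟨C, hCC⟩, _⟩ := hM σ hσfg a w
        have h1 : ∀ c : C, ∃ d, σ c (a * d) ∧ ∃ t, σ c (w * t) := by
          rintro ⟨c, hc⟩
          obtain ⟨⟨u, hu⟩, hv⟩ := (Set.ext_iff.1 hCC c).2 (by
            simp only [Set.mem_setOf_eq, Set.mem_iUnion, exists_prop]
            exact ⟨c, hc, 1, by simpa using hσ.1.refl c⟩)
          exact ⟨u, hu, hv⟩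
        choose d hd ht using h1
        refine ⟨Set.range d, Set.finite_range d, ?_, ?_⟩
        · rintro _ ⟨c, rfl⟩
          obtain ⟨t, ht⟩ := ht c
          exact ⟨t, hσ.1.trans (hσ.1.symm (hd c)) ht⟩
        · intro u hu
          have hm := (Set.ext_iff.1 hCC (a * u)).1 ⟨⟨u, hσ.1.refl _⟩, hu⟩
          simp only [Set.mem_setOf_eq, Set.mem_iUnion, exists_prop] at hm
          obtain ⟨c, hc, s, hs⟩ := hm
          refine ⟨_, ⟨⟨c, hc⟩, rfl⟩, s, ?_⟩
          have := hσ.2 _ _ s (hd ⟨c, hc⟩)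
          rw [mul_assoc] at this
          exact hσ.1.trans hs this
      choose D hDf hD1 hD2 using hD
      obtain ⟨_, K, hK, hKr, hKK, hKmin⟩ := hM σ hσfg a a
      refine ⟨(fun p : M × M => ((p.1 : WithZero M), (p.2 : WithZero M))) '' K ∪
        (fun d : M => ((d : WithZero M), (0 : WithZero M))) '' (⋃ w ∈ W, D w),
        (hK.image _).union ((hWf.biUnion fun w _ => hDf w).image _), hann, ?_, ?_⟩
      · rintro _ (⟨p, hp, rfl⟩ | ⟨d, hd, rfl⟩)
        · simpa using hC _ _ (hKK p hp)
        · simp only [Set.mem_iUnion, exists_prop] at hd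
          obtain ⟨w, hw, hd⟩ := hd
          obtain ⟨t, ht⟩ := hD1 w d hd
          have h2 := hr.2 _ _ (t : WithZero M) (hWr w hw)
          rw [zero_mul, ← WithZero.coe_mul] at h2
          simpa using hr.1.trans (hC _ _ ht) h2
      · intro r' hr' h x y hxy
        have hs : ∀ u v : M, σ (a * u) (a * v) → r' u v :=
          hKmin _ (res_cong hr') (fun p hp => h _ (Or.inl ⟨p, hp, rfl⟩))
        have hz : ∀ u : WithZero M, r (a * u) 0 → r' u 0 := by
          intro u hu
          induction u with
          | zero => exact hr'.1.refl _
          | coe u =>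
            rw [← WithZero.coe_mul] at hu
            obtain ⟨w, hw, hu⟩ := hA _ hu
            obtain ⟨d, hd, s, hds⟩ := hD2 w u hu
            have h1 : r' d 0 := h (d, 0) (Or.inr ⟨d, Set.mem_biUnion hw hd, rfl⟩)
            have h2 := hr'.2 _ _ (s : WithZero M) h1
            rw [zero_mul, ← WithZero.coe_mul] at h2
            exact hr'.1.trans (hs _ _ hds) h2
        have hboth : r (a * x) 0 → r (a * y) 0 → r' x y := fun h1 h2 =>
          hr'.1.trans (hz x h1) (hr'.1.symm (hz y h2))
        induction x with
        | zero => exact hr'.1.symm (hz y (by simpa using hr.1.symm hxy))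
        | coe x =>
          induction y with
          | zero => exact hz x (by simpa using hxy)
          | coe y =>
            simp only [← WithZero.coe_mul] at hxy hboth
            rcases hB _ _ hxy with h | h
            · exact hs _ _ h
            · exact hboth h.1 h.2

theorem stmt15 {M : Type*} [Monoid M] :
    RightCoherent M ↔ RightCoherent (WithZero M) := by
  exact ⟨forth, back⟩
end

section
/- Let S and T be monoids. If the direct product S × T is right coherent, then both S and T are right coherent. -/
theorem IsRightCongruence.comap {M N : Type*} [Monoid M] [Monoid N] (f : M →* N)
    {r : N → N → Prop} (hr : IsRightCongruence r) :
    IsRightCongruence (fun x y => r (f x) (f y)) := by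
  refine ⟨⟨fun x => hr.1.refl _, fun h => hr.1.symm h, fun h h' => hr.1.trans h h'⟩, ?_⟩
  intro a b c h
  simpa using hr.2 _ _ (f c) h

theorem IsRightCongruence.mulLeft {M : Type*} [Monoid M] (a : M)
    {r : M → M → Prop} (hr : IsRightCongruence r) :
    IsRightCongruence (fun x y => r (a * x) (a * y)) := by
  refine ⟨⟨fun x => hr.1.refl _, fun h => hr.1.symm h, fun h h' => hr.1.trans h h'⟩, ?_⟩
  intro u v c h
  simpa [mul_assoc] using hr.2 _ _ c h

theorem exists_rCongGenBy {M : Type*} [Monoid M] (H : Set (M × M)) :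
    ∃ r, RCongGenBy H r := by
  refine ⟨fun x y => ∀ r' : M → M → Prop, IsRightCongruence r' → (∀ p ∈ H, r' p.1 p.2) → r' x y,
    ⟨⟨?_, ?_, ?_⟩, ?_⟩, ?_, ?_⟩
  · intro x r' h _
    exact h.1.refl x
  · intro x y hxy r' h hH
    exact h.1.symm (hxy r' h hH)
  · intro x y z hxy hyz r' h hH
    exact h.1.trans (hxy r' h hH) (hyz r' h hH)
  · intro a b c hab r' h hH
    exact h.2 _ _ _ (hab r' h hH)
  · intro p hp r' _ hH
    exact hH p hp
  · intro r' h hH x y hxy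
    exact hxy r' h hH

/-- Right coherence passes to retracts. -/
theorem RightCoherent.retract {P S : Type*} [Monoid P] [Monoid S] (f : P →* S) (g : S →* P)
    (hfg : ∀ s, f (g s) = s) (h : RightCoherent P) : RightCoherent S := by
  rintro r ⟨H, hH, hr, hHr, hmin⟩ a b
  obtain ⟨q, hq⟩ := exists_rCongGenBy (Prod.map g g '' H)
  obtain ⟨⟨C, hC⟩, K, hK, hKr, hKK, hKmin⟩ := h q ⟨_, hH.image _, hq⟩ (g a) (g b)
  obtain ⟨hqr, hqH, hqmin⟩ := hq
  have up : ∀ x y, r x y → q (g x) (g y) :=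
    hmin _ (hqr.comap g) fun p hp => hqH _ ⟨p, hp, rfl⟩
  have down : ∀ x y, q x y → r (f x) (f y) := by
    refine hqmin _ (hr.comap f) ?_
    rintro _ ⟨p, hp, rfl⟩
    simpa [hfg] using hHr p hp
  classical
  refine ⟨⟨C.image f, ?_⟩, Prod.map f f '' K, hK.image _, hr.mulLeft a, ?_, ?_⟩
  · ext x
    simp only [Set.mem_setOf_eq, Set.mem_iUnion, Finset.mem_image, exists_prop]
    constructor
    · rintro ⟨⟨s, hs⟩, t, ht⟩
      have hx : g x ∈ {x : P | (∃ s : P, q x (g a * s)) ∧ (∃ t : P, q x (g b * t))} :=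
        ⟨⟨g s, by simpa using up _ _ hs⟩, g t, by simpa using up _ _ ht⟩
      rw [hC] at hx
      simp only [Set.mem_setOf_eq, Set.mem_iUnion, exists_prop] at hx
      obtain ⟨c, hc, p, hp⟩ := hx
      exact ⟨f c, ⟨c, hc, rfl⟩, f p, by simpa [hfg] using down _ _ hp⟩
    · rintro ⟨_, ⟨c, hc, rfl⟩, s, hs⟩
      have hx : c ∈ {x : P | (∃ s : P, q x (g a * s)) ∧ (∃ t : P, q x (g b * t))} := by
        rw [hC]
        simp only [Set.mem_setOf_eq, Set.mem_iUnion, exists_prop]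
        exact ⟨c, hc, 1, by simpa using hqr.1.refl c⟩
      obtain ⟨⟨u, hu⟩, v, hv⟩ := hx
      refine ⟨⟨f u * s, hr.1.trans hs ?_⟩, f v * s, hr.1.trans hs ?_⟩
      · simpa [hfg, mul_assoc] using hr.2 _ _ s (down _ _ hu)
      · simpa [hfg, mul_assoc] using hr.2 _ _ s (down _ _ hv)
  · rintro _ ⟨p, hp, rfl⟩
    simpa [hfg] using down _ _ (hKK p hp)
  · intro r' hr' hK' x y hxy
    have := hKmin _ (hr'.comap f) (fun p hp => hK' _ ⟨p, hp, rfl⟩) (g x) (g y)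
      (by simpa using up _ _ hxy)
    simpa [hfg] using this

theorem stmt16 {S T : Type*} [Monoid S] [Monoid T]
    (h : RightCoherent (S × T)) :
    RightCoherent S ∧ RightCoherent T :=
  ⟨h.retract (MonoidHom.fst S T) (MonoidHom.inl S T) (fun _ => rfl),
    h.retract (MonoidHom.snd S T) (MonoidHom.inr S T) (fun _ => rfl)⟩
end

section
/- Let F be the free monoid on the three-element set {a, x, b}, and let ρ be the right congruence on the direct product F × F generated by the two pairs ((ax, 1), (a, x)) and ((ab, 1), (aa, 1)). Then the right congruence ann((a,b)ρ) = {(u,v) ∈ (F×F) × (F×F) : ((a,b)u) ρ ((a,b)v)} on F × F is not finitely generated; consequently F × F is not right coherent. -/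
abbrev F17 : Type := FreeMonoid (Fin 3)

def a17 : F17 := FreeMonoid.of 0
def x17 : F17 := FreeMonoid.of 1
def b17 : F17 := FreeMonoid.of 2

/-- Truncated normalisation: turn the first non-`x` letter, if it is `b` and at position `< K`, to `a`. -/
def psi17 : ℕ → List (Fin 3) → List (Fin 3)
  | 0, u => u
  | _ + 1, [] => []
  | _ + 1, 0 :: u => 0 :: u
  | k + 1, 1 :: u => 1 :: psi17 k u
  | _ + 1, 2 :: u => 0 :: u

/-- Untruncated version. -/
def Psi17 : List (Fin 3) → List (Fin 3)
  | [] => []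
  | 0 :: u => 0 :: u
  | 1 :: u => 1 :: Psi17 u
  | 2 :: u => 0 :: u

def M17 : List (Fin 3) → List (Fin 3) → List (Fin 3) × List (Fin 3)
  | [], q => ([], q)
  | 0 :: u, q => (0 :: u, q)
  | 1 :: u, q => M17 u (1 :: q)
  | 2 :: u, q => (0 :: u, q)

def N17 : List (Fin 3) → List (Fin 3) → List (Fin 3) × List (Fin 3)
  | [], q => ([], q)
  | 0 :: u, q => (0 :: (M17 u q).1, (M17 u q).2)
  | 1 :: u, q => (1 :: u, q)
  | 2 :: u, q => (2 :: u, q)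

def R17 (w : List (Fin 3)) : List (Fin 3) → List (Fin 3) × List (Fin 3)
  | [] => ([], [])
  | 0 :: _ => ([], [])
  | 1 :: q => (1 :: (R17 w q).1, (R17 w q).2)
  | 2 :: v => (w, v)

lemma psi17_eq (k : ℕ) (u : List (Fin 3)) (h : u.length ≤ k) : psi17 k u = Psi17 u := by
  induction k generalizing u with
  | zero =>
    have : u = [] := List.length_eq_zero_iff.mp (by omega)
    subst this; rfl
  | succ k ih =>
    rcases u with _ | ⟨c, u⟩
    · rfl
    · have h' : u.length ≤ k := by simpa using h
      fin_cases c
      · rfl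
      · exact congrArg (List.cons 1) (ih u h')
      · rfl

lemma psi17_append (k : ℕ) (u u' c : List (Fin 3)) (h : psi17 k u = psi17 k u') :
    psi17 k (u ++ c) = psi17 k (u' ++ c) := by
  induction k generalizing u u' with
  | zero => simp only [psi17] at h; rw [h]
  | succ k ih =>
    rcases u with _ | ⟨d, u⟩ <;> rcases u' with _ | ⟨d', u'⟩
    · rfl
    · fin_cases d' <;> simp [psi17] at h
    · fin_cases d <;> simp [psi17] at h
    · fin_cases d <;> fin_cases d' <;> simp [psi17] at h ⊢ <;> first | exact ih _ _ h | exact h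

lemma N17_M17 (w q c d : List (Fin 3)) :
    N17 (0 :: (M17 w q).1 ++ c) ((M17 w q).2 ++ d) = N17 (0 :: w ++ c) (q ++ d) := by
  induction w generalizing q with
  | nil => rfl
  | cons e w ih =>
    fin_cases e
    · rfl
    · exact ih (1 :: q)
    · rfl

lemma N17_N17 (p q c d : List (Fin 3)) :
    N17 ((N17 p q).1 ++ c) ((N17 p q).2 ++ d) = N17 (p ++ c) (q ++ d) := by
  rcases p with _ | ⟨e, p⟩
  · rfl
  · fin_cases e
    · exact N17_M17 p q c d
    · rfl
    · rfl

lemma R17_rep (w v : List (Fin 3)) (n : ℕ) :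
    R17 w (List.replicate n 1 ++ 2 :: v) = (List.replicate n 1 ++ w, v) := by
  induction n with
  | zero => rfl
  | succ n ih => simp [List.replicate_succ, R17, ih]

lemma R17_M17 (u v : List (Fin 3)) (n : ℕ) :
    R17 (M17 u (List.replicate n 1 ++ 2 :: v)).1 (M17 u (List.replicate n 1 ++ 2 :: v)).2
      = (List.replicate n 1 ++ Psi17 u, v) := by
  induction u generalizing n with
  | nil => simp [M17, Psi17, R17_rep]
  | cons e u ih =>
    fin_cases e
    · simp [M17, Psi17, R17_rep]
    · have := ih (n + 1)
      simp only [List.replicate_succ, List.cons_append] at this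
      simp only [M17, Psi17, this]
      simp [← List.cons_append, ← List.replicate_succ, List.replicate_succ']
    · simp [M17, Psi17, R17_rep]

lemma psi17_ne (k : ℕ) :
    psi17 k (List.replicate k 1 ++ [2]) ≠ psi17 k (List.replicate k 1 ++ [0]) := by
  induction k with
  | zero => simp [psi17]
  | succ k ih => simpa [List.replicate_succ, psi17] using ih

lemma ann17_inv (r : F17 × F17 → F17 × F17 → Prop)
    (hr : RCongGenBy
      ({((a17 * x17, (1 : F17)), (a17, x17)),
        ((a17 * b17, (1 : F17)), (a17 * a17, (1 : F17)))} :
        Set ((F17 × F17) × (F17 × F17))) r) (u v : F17 × F17)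
    (h : r ((a17, b17) * u) ((a17, b17) * v)) :
    Psi17 u.1.toList = Psi17 v.1.toList ∧ u.2 = v.2 := by
  have key := hr.2.2 (fun s t => N17 s.1.toList s.2.toList = N17 t.1.toList t.2.toList)
    ⟨⟨fun _ => rfl, fun h => h.symm, fun h h' => h.trans h'⟩, fun s t c hst => by
      have h1 := N17_N17 s.1.toList s.2.toList c.1.toList c.2.toList
      have h2 := N17_N17 t.1.toList t.2.toList c.1.toList c.2.toList
      simp only at hst
      rw [hst] at h1
      exact h1.symm.trans h2⟩
    (by
      intro p hp
      rcases hp with hp | hp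
      · subst hp; rfl
      · rw [Set.mem_singleton_iff] at hp
        subst hp; rfl) _ _ h
  have key' : N17 (0 :: u.1.toList) (2 :: u.2.toList) = N17 (0 :: v.1.toList) (2 :: v.2.toList) :=
    key
  simp only [N17, Prod.mk.injEq, List.cons.injEq, true_and] at key'
  have h1 := R17_M17 u.1.toList u.2.toList 0
  have h2 := R17_M17 v.1.toList v.2.toList 0
  simp only [List.replicate_zero, List.nil_append] at h1 h2
  rw [key'.1, key'.2, h2] at h1
  simp only [Prod.mk.injEq] at h1
  exact ⟨h1.1.symm, FreeMonoid.toList.injective h1.2.symm⟩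

lemma shift17 (r : F17 × F17 → F17 × F17 → Prop)
    (hr : RCongGenBy
      ({((a17 * x17, (1 : F17)), (a17, x17)),
        ((a17 * b17, (1 : F17)), (a17 * a17, (1 : F17)))} :
        Set ((F17 × F17) × (F17 × F17))) r) (n : ℕ) (w q : F17) :
    r (a17 * (x17 ^ n * w), q) (a17 * w, x17 ^ n * q) := by
  induction n generalizing q with
  | zero => simpa using hr.1.1.refl _
  | succ n ih =>
    have h := hr.1.2 _ _ (x17 ^ n * w, q) (hr.2.1 _ (Or.inl rfl))
    have h2 := hr.1.1.trans h (by simpa using ih (x17 * q))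
    have e1 : a17 * (x17 ^ (n + 1) * w) = a17 * x17 * (x17 ^ n * w) := by
      rw [pow_succ']; simp only [mul_assoc]
    have e2 : x17 ^ (n + 1) * q = x17 ^ n * (x17 * q) := by
      rw [pow_succ, mul_assoc]
    rw [e1, e2]
    simpa using h2

lemma ann17_mem (r : F17 × F17 → F17 × F17 → Prop)
    (hr : RCongGenBy
      ({((a17 * x17, (1 : F17)), (a17, x17)),
        ((a17 * b17, (1 : F17)), (a17 * a17, (1 : F17)))} :
        Set ((F17 × F17) × (F17 × F17))) r) (n : ℕ) :
    r ((a17, b17) * (x17 ^ n * b17, 1)) ((a17, b17) * (x17 ^ n * a17, 1)) := by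
  have h1 := shift17 r hr n b17 b17
  have h2 := shift17 r hr n a17 b17
  have h := hr.1.2 _ _ (1, x17 ^ n * b17) (hr.2.1 _ (Or.inr rfl))
  have h3 := hr.1.1.trans h1 (hr.1.1.trans (by simpa using h) (hr.1.1.symm h2))
  simpa using h3

lemma pow17 (n : ℕ) (c : Fin 3) :
    (x17 ^ n * FreeMonoid.of c).toList = List.replicate n 1 ++ [c] := by
  induction n with
  | zero => rfl
  | succ n ih =>
    rw [pow_succ', mul_assoc, List.replicate_succ, List.cons_append, ← ih]; rfl

theorem stmt17 (r : F17 × F17 → F17 × F17 → Prop)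
    (hr : RCongGenBy
      ({((a17 * x17, (1 : F17)), (a17, x17)),
        ((a17 * b17, (1 : F17)), (a17 * a17, (1 : F17)))} :
        Set ((F17 × F17) × (F17 × F17))) r) :
    ¬ FGRightCongruence (fun u v : F17 × F17 => r ((a17, b17) * u) ((a17, b17) * v)) ∧
    ¬ RightCoherent (F17 × F17) := by
  have main : ¬ FGRightCongruence
      (fun u v : F17 × F17 => r ((a17, b17) * u) ((a17, b17) * v)) := by
    rintro ⟨H, hfin, hH⟩
    obtain ⟨K, hK⟩ := (hfin.image
      (fun p => max p.1.1.toList.length p.2.1.toList.length)).bddAbove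
    have key := hH.2.2
      (fun s t => psi17 K s.1.toList = psi17 K t.1.toList ∧ s.2 = t.2)
      ⟨⟨fun _ => ⟨rfl, rfl⟩, fun h => ⟨h.1.symm, h.2.symm⟩,
        fun h h' => ⟨h.1.trans h'.1, h.2.trans h'.2⟩⟩, fun s t c hst =>
          ⟨psi17_append K _ _ c.1.toList hst.1, congrArg (· * c.2) hst.2⟩⟩
      (by
        intro p hp
        have h1 := ann17_inv r hr _ _ (hH.2.1 p hp)
        have h2 := hK ⟨p, hp, rfl⟩
        simp only [max_le_iff] at h2
        refine ⟨?_, h1.2⟩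
        rw [psi17_eq _ _ h2.1, psi17_eq _ _ h2.2]
        exact h1.1) _ _ (ann17_mem r hr K)
    have k1 := key.1
    simp only [a17, b17, pow17] at k1
    exact psi17_ne K k1
  exact ⟨main, fun hc => main (hc r ⟨_, by simp, hr⟩ (a17, b17) 1).2⟩
end

section
/- Let S be a right coherent monoid and let T be a finite monoid. Then the direct product S × T is right coherent. -/
namespace CohProd

variable {S : Type*} {T : Type*} [Monoid S]

/-- the right action of `S` on the free act `S × T`. -/
def act (x : S × T) (c : S) : S × T := (x.1 * c, x.2)

theorem act_act (x : S × T) (c d : S) : act (act x c) d = act x (c * d) := by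
  simp [act, mul_assoc]

theorem act_one (x : S × T) : act x (1 : S) = x := by simp [act]

def Step (H : Set ((S × T) × (S × T))) (x y : S × T) : Prop :=
  ∃ p q : S × T, ∃ c : S, ((p, q) ∈ H ∨ (q, p) ∈ H) ∧ x = act p c ∧ y = act q c

/-- the act congruence generated by `H`. -/
def Gen (H : Set ((S × T) × (S × T))) : S × T → S × T → Prop :=
  Relation.ReflTransGen (Step H)

theorem Gen.refl {H : Set ((S × T) × (S × T))} (x : S × T) : Gen H x x :=
  Relation.ReflTransGen.refl

theorem Gen.trans {H : Set ((S × T) × (S × T))} {x y z : S × T} (h : Gen H x y)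
    (h' : Gen H y z) : Gen H x z :=
  Relation.ReflTransGen.trans h h'

theorem Gen.symm {H : Set ((S × T) × (S × T))} {x y : S × T} (h : Gen H x y) : Gen H y x := by
  have key : ∀ a b, Step H a b → Step H b a := by
    rintro a b ⟨p, q, c, h, h1, h2⟩
    exact ⟨q, p, c, h.symm, h2, h1⟩
  induction h with
  | refl => exact Gen.refl _
  | tail _ hs ih => exact Gen.trans (Relation.ReflTransGen.single (key _ _ hs)) ih

theorem Gen.act {H : Set ((S × T) × (S × T))} {x y : S × T} (h : Gen H x y) (c : S) :
    Gen H (act x c) (act y c) := by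
  induction h with
  | refl => exact Gen.refl _
  | tail _ hs ih =>
    obtain ⟨p, q, d, h, rfl, rfl⟩ := hs
    refine Relation.ReflTransGen.tail ih ⟨p, q, d * c, h, ?_, ?_⟩ <;> rw [act_act]

theorem Gen.of {H : Set ((S × T) × (S × T))} {p q : S × T} (h : (p, q) ∈ H) : Gen H p q :=
  Relation.ReflTransGen.single ⟨p, q, 1, Or.inl h, (act_one _).symm, (act_one _).symm⟩

theorem Gen.of' {H : Set ((S × T) × (S × T))} {p q : S × T} (h : (p, q) ∈ H ∨ (q, p) ∈ H) :
    Gen H p q := h.elim Gen.of fun h => (Gen.of h).symm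

theorem Gen.min {H : Set ((S × T) × (S × T))} {R : S × T → S × T → Prop} (hR : Equivalence R)
    (hact : ∀ x y c, R x y → R (CohProd.act x c) (CohProd.act y c))
    (hH : ∀ p q, (p, q) ∈ H → R p q) {x y : S × T} (h : Gen H x y) : R x y := by
  induction h with
  | refl => exact hR.refl _
  | tail _ hs ih =>
    obtain ⟨p, q, d, h, rfl, rfl⟩ := hs
    refine hR.trans ih (hact _ _ _ ?_)
    exact h.elim (hH _ _) fun h => hR.symm (hH _ _ h)

theorem Gen.equivalence (H : Set ((S × T) × (S × T))) : Equivalence (Gen H) :=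
  ⟨Gen.refl, Gen.symm, Gen.trans⟩

theorem Gen.mono {H H' : Set ((S × T) × (S × T))} (hH : ∀ p q, (p, q) ∈ H → Gen H' p q)
    {x y : S × T} (h : Gen H x y) : Gen H' x y :=
  Gen.min (Gen.equivalence H') (fun _ _ c h => h.act c) hH h

/-- `H` only involves generators from `J`. -/
def Supp (H : Set ((S × T) × (S × T))) (J : Set T) : Prop :=
  ∀ p q, (p, q) ∈ H → p.2 ∈ J ∧ q.2 ∈ J

theorem fg_single {H : Set ((S × T) × (S × T))} (hf : H.Finite) {k : T} (hs : Supp H {k}) :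
    FGRightCongruence (fun u v : S => Gen H (u, k) (v, k)) := by
  refine ⟨(fun p : (S × T) × (S × T) => (p.1.1, p.2.1)) '' H, hf.image _, ⟨⟨⟨?_, ?_, ?_⟩, ?_⟩, ?_, ?_⟩⟩
  · intro x; exact Gen.refl _
  · intro x y h; exact h.symm
  · intro x y z h h'; exact h.trans h'
  · intro a b c h; exact h.act c
  · rintro _ ⟨⟨⟨p, i⟩, ⟨q, j⟩⟩, h, rfl⟩
    obtain ⟨h1, h2⟩ := hs _ _ h
    simp only [Set.mem_singleton_iff] at h1 h2
    subst h1; subst h2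
    exact Gen.of h
  · intro r' hr' hH x y h
    refine Gen.min (R := fun x y => r' x.1 y.1)
      ⟨fun x => hr'.1.refl _, fun h => hr'.1.symm h, fun h h' => hr'.1.trans h h'⟩ ?_ ?_ h
    · intro x y c h; exact hr'.2 _ _ c h
    · intro p q h; exact hH _ ⟨_, h, rfl⟩

theorem pb_cyc (hS : RightCoherent S) {r : S → S → Prop} (hr : FGRightCongruence r) (a b : S) :
    ∃ P : Set (S × S), P.Finite ∧ (∀ p ∈ P, r (a * p.1) (b * p.2)) ∧
      ∀ u v, r (a * u) (b * v) → ∃ p ∈ P, ∃ z, r (a * u) (a * (p.1 * z)) := by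
  obtain ⟨⟨C, hC⟩, -⟩ := hS r hr a b
  obtain ⟨_, _, hcong, _⟩ := hr
  have hmem : ∀ c : C, ∃ p : S × S, r c (a * p.1) ∧ r c (b * p.2) := by
    rintro ⟨c, hc⟩
    have : c ∈ {x : S | (∃ s : S, r x (a * s)) ∧ (∃ t : S, r x (b * t))} := by
      rw [hC]
      simp only [Set.mem_iUnion]
      exact ⟨c, hc, 1, by rw [mul_one]; exact hcong.1.refl _⟩
    obtain ⟨⟨s, hs⟩, ⟨t, ht⟩⟩ := this
    exact ⟨(s, t), hs, ht⟩
  choose f hf using hmem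
  refine ⟨Set.range f, Set.finite_range f, ?_, ?_⟩
  · rintro _ ⟨c, rfl⟩
    exact hcong.1.trans (hcong.1.symm (hf c).1) (hf c).2
  · intro u v h
    have : a * u ∈ {x : S | (∃ s : S, r x (a * s)) ∧ (∃ t : S, r x (b * t))} :=
      ⟨⟨u, hcong.1.refl _⟩, ⟨v, h⟩⟩
    rw [hC] at this
    simp only [Set.mem_iUnion] at this
    obtain ⟨c, hc, z, hz⟩ := this
    refine ⟨_, ⟨⟨c, hc⟩, rfl⟩, z, ?_⟩
    have := hcong.2 _ _ z (hf ⟨c, hc⟩).1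
    rw [← mul_assoc]
    exact hcong.1.trans hz this

theorem elim_step (hS : RightCoherent S) {H : Set ((S × T) × (S × T))} (hf : H.Finite)
    {J : Set T} {k : T} (hk : k ∉ J) (hs : Supp H (insert k J)) :
    ∃ H' : Set ((S × T) × (S × T)), H'.Finite ∧ Supp H' J ∧
      ∀ x y : S × T, x.2 ∈ J → y.2 ∈ J → (Gen H x y ↔ Gen H' x y) := by
  classical
  set R : Set ((S × T) × (S × T)) := {p ∈ H | p.1.2 = k ∧ p.2.2 = k} with hR
  have hRfg : FGRightCongruence (fun u v : S => Gen R (u, k) (v, k)) := by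
    refine fg_single (hf.subset (Set.sep_subset _ _)) ?_
    rintro p q ⟨_, h1, h2⟩
    exact ⟨h1, h2⟩
  have hRH : ∀ {x y}, Gen R x y → Gen H x y := fun h => Gen.mono (fun p q h => Gen.of h.1) h
  -- mixed pairs
  set M : Set ((S × T) × (S × T)) :=
    {p | (p ∈ H ∨ p.swap ∈ H) ∧ p.1.2 ∈ J ∧ p.2.2 = k} with hM
  have hMf : M.Finite := by
    refine (hf.union (hf.image Prod.swap)).subset ?_
    rintro p ⟨h | h, _⟩
    · exact Or.inl h
    · exact Or.inr ⟨_, h, Prod.swap_swap p⟩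
  choose A hAf hA using fun q : S => (hS _ hRfg q q).2
  choose P hPf hP1 hP2 using fun q q' : S => pb_cyc hS hRfg q q'
  set H1 : Set ((S × T) × (S × T)) := {p ∈ H | p.1.2 ∈ J ∧ p.2.2 ∈ J} with hH1
  set H2 : Set ((S × T) × (S × T)) :=
    ⋃ m ∈ M, (fun w : S × S => (act m.1 w.1, act m.1 w.2)) '' A m.2.1 with hH2
  set H3 : Set ((S × T) × (S × T)) :=
    ⋃ m ∈ M, ⋃ m' ∈ M, (fun w : S × S => (act m.1 w.1, act m'.1 w.2)) '' P m.2.1 m'.2.1 with hH3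
  have hMH : ∀ m ∈ M, ∀ w, Gen H (act m.1 w) (m.2.1 * w, k) := by
    rintro ⟨b, q, j⟩ ⟨h, h1, h2⟩ w
    simp only at h2
    subst h2
    exact (Gen.of' h).act w
  refine ⟨H1 ∪ H2 ∪ H3, ?_, ?_, ?_⟩
  · refine ((hf.subset (Set.sep_subset _ _)).union ?_).union ?_
    · exact hMf.biUnion fun m _ => (hAf _).image _
    · exact hMf.biUnion fun m _ => hMf.biUnion fun m' _ => (hPf _ _).image _
  · rintro p q ((h | h) | h)
    · exact h.2
    · simp only [hH2, Set.mem_iUnion] at h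
      obtain ⟨m, hm, w, hw, h⟩ := h
      simp only [Prod.mk.injEq] at h
      obtain ⟨rfl, rfl⟩ := h
      exact ⟨hm.2.1, hm.2.1⟩
    · simp only [hH3, Set.mem_iUnion] at h
      obtain ⟨m, hm, m', hm', w, hw, h⟩ := h
      simp only [Prod.mk.injEq] at h
      obtain ⟨rfl, rfl⟩ := h
      exact ⟨hm.2.1, hm'.2.1⟩
  · set H' := H1 ∪ H2 ∪ H3 with hH'
    have hann : ∀ m ∈ M, ∀ u v, Gen R (m.2.1 * u, k) (m.2.1 * v, k) →
        Gen H' (act m.1 u) (act m.1 v) := by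
      intro m hm u v h
      refine (hA m.2.1).2.2 (fun u v => Gen H' (act m.1 u) (act m.1 v)) ⟨⟨?_, ?_, ?_⟩, ?_⟩ ?_ u v h
      · intro x; exact Gen.refl _
      · intro x y h; exact h.symm
      · intro x y z h h'; exact h.trans h'
      · intro a b c h
        have := h.act c
        rwa [act_act, act_act] at this
      · intro p hp
        refine Gen.of (Or.inl (Or.inr ?_))
        simp only [hH2, Set.mem_iUnion]
        exact ⟨m, hm, p, hp, rfl⟩
    have key : ∀ m ∈ M, ∀ m' ∈ M, ∀ u v, Gen R (m.2.1 * u, k) (m'.2.1 * v, k) →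
        Gen H' (act m.1 u) (act m'.1 v) := by
      intro m hm m' hm' u v h
      obtain ⟨p, hp, z, hz⟩ := hP2 m.2.1 m'.2.1 u v h
      have h1 := hP1 _ _ p hp
      have h1z : Gen R (m.2.1 * (p.1 * z), k) (m'.2.1 * (p.2 * z), k) := by
        have := h1.act z
        simpa [act, mul_assoc] using this
      have h3 : Gen H' (act m.1 p.1) (act m'.1 p.2) := by
        refine Gen.of (Or.inr ?_)
        simp only [hH3, Set.mem_iUnion]
        exact ⟨m, hm, m', hm', p, hp, rfl⟩
      have h3z := h3.act z
      rw [act_act, act_act] at h3z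
      have h4 : Gen R (m'.2.1 * (p.2 * z), k) (m'.2.1 * v, k) :=
        (h1z.symm.trans (Gen.symm hz)).trans h
      exact ((hann m hm _ _ hz).trans h3z).trans (hann m' hm' _ _ h4)
    intro x y hx hy
    constructor
    · intro h
      have inv : (y.2 ∈ J ∧ Gen H' x y) ∨
          (y.2 = k ∧ ∃ m ∈ M, ∃ w, Gen H' x (act m.1 w) ∧ Gen R (m.2.1 * w, k) y) := by
        clear hy
        induction h with
        | refl => exact Or.inl ⟨hx, Gen.refl _⟩
        | tail _ hst ih =>
          obtain ⟨p, q, c, hpq, rfl, rfl⟩ := hst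
          have hpk : p.2 ∈ insert k J ∧ q.2 ∈ insert k J := by
            rcases hpq with h | h
            · exact hs _ _ h
            · exact (hs _ _ h).symm
          rcases ih with ⟨hp, hg⟩ | ⟨hp, m, hm, w, hg, hr⟩
          · have hp : p.2 ∈ J := hp
            rcases hpk.2 with hq | hq
            · refine Or.inr ⟨hq, (p, q), ⟨hpq, hp, hq⟩, c, hg, ?_⟩
              obtain ⟨q, j⟩ := q
              simp only at hq
              subst hq
              exact Gen.refl _
            · refine Or.inl ⟨hq, hg.trans (Gen.act ?_ c)⟩
              refine Gen.of' (hpq.imp (fun h => ?_) (fun h => ?_))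
              · exact Or.inl (Or.inl ⟨h, hp, hq⟩)
              · exact Or.inl (Or.inl ⟨h, hq, hp⟩)
          · have hp : p.2 = k := hp
            rcases hpk.2 with hq | hq
            · refine Or.inr ⟨hq, m, hm, w, hg, hr.trans (Gen.act ?_ c)⟩
              refine Gen.of' (hpq.imp (fun h => ?_) (fun h => ?_))
              · exact ⟨h, hp, hq⟩
              · exact ⟨h, hq, hp⟩
            · refine Or.inl ⟨hq, hg.trans ?_⟩
              refine key m hm (q, p) ⟨hpq.symm, hq, hp⟩ w c ?_
              obtain ⟨p, j⟩ := p
              simp only at hp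
              subst hp
              exact hr
      rcases inv with h | h
      · exact h.2
      · exact absurd (h.1 ▸ hy) hk
    · refine Gen.mono ?_
      rintro p q ((h | h) | h)
      · exact Gen.of h.1
      · simp only [hH2, Set.mem_iUnion] at h
        obtain ⟨m, hm, w, hw, h⟩ := h
        simp only [Prod.mk.injEq] at h
        obtain ⟨rfl, rfl⟩ := h
        exact ((hMH m hm _).trans (hRH ((hA m.2.1).2.1 w hw))).trans (hMH m hm _).symm
      · simp only [hH3, Set.mem_iUnion] at h
        obtain ⟨m, hm, m', hm', w, hw, h⟩ := h
        simp only [Prod.mk.injEq] at h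
        obtain ⟨rfl, rfl⟩ := h
        exact ((hMH m hm _).trans (hRH (hP1 _ _ w hw))).trans (hMH m' hm' _).symm

theorem elim_all (hS : RightCoherent S) (J : Set T) (K : Finset T) :
    ∀ H : Set ((S × T) × (S × T)), H.Finite → Supp H (↑K ∪ J) →
    ∃ H' : Set ((S × T) × (S × T)), H'.Finite ∧ Supp H' J ∧
      ∀ x y : S × T, x.2 ∈ J → y.2 ∈ J → (Gen H x y ↔ Gen H' x y) := by
  classical
  induction K using Finset.induction_on with
  | empty =>
    intro H hf hs
    exact ⟨H, hf, by simpa using hs, fun _ _ _ _ => Iff.rfl⟩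
  | insert k K hk ih =>
    intro H hf hs
    rw [Finset.coe_insert, Set.insert_union] at hs
    by_cases hkJ : k ∈ (↑K ∪ J : Set T)
    · rw [Set.insert_eq_of_mem hkJ] at hs
      exact ih H hf hs
    · obtain ⟨H', hf', hs', h'⟩ := elim_step hS hf hkJ hs
      obtain ⟨H'', hf'', hs'', h''⟩ := ih H' hf' hs'
      exact ⟨H'', hf'', hs'', fun x y hx hy =>
        (h' x y (Or.inr hx) (Or.inr hy)).trans (h'' x y hx hy)⟩

theorem restrict [Finite T] (hS : RightCoherent S) (J : Set T)
    (H : Set ((S × T) × (S × T))) (hf : H.Finite) :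
    ∃ H' : Set ((S × T) × (S × T)), H'.Finite ∧ Supp H' J ∧
      ∀ x y : S × T, x.2 ∈ J → y.2 ∈ J → (Gen H x y ↔ Gen H' x y) := by
  have := Fintype.ofFinite T
  exact elim_all hS J Finset.univ H hf (fun p q _ => by simp)

theorem fg_cyc [Finite T] (hS : RightCoherent S)
    {H : Set ((S × T) × (S × T))} (hf : H.Finite) (k : T) :
    FGRightCongruence (fun u v : S => Gen H (u, k) (v, k)) := by
  obtain ⟨H', hf', hs', h'⟩ := restrict hS {k} H hf
  have := fg_single hf' hs'
  convert this using 3 with u v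
  exact h' _ _ rfl rfl

theorem fg_ann [Finite T] (hS : RightCoherent S)
    {H : Set ((S × T) × (S × T))} (hf : H.Finite) (x : S × T) :
    FGRightCongruence (fun u v : S => Gen H (act x u) (act x v)) :=
  (hS _ (fg_cyc hS hf x.2) x.1 x.1).2

def PB (H : Set ((S × T) × (S × T))) (x y : S × T) : Prop :=
  ∃ P : Set (S × S), P.Finite ∧ (∀ p ∈ P, Gen H (act x p.1) (act y p.2)) ∧
      ∀ u v, Gen H (act x u) (act y v) → ∃ p ∈ P, ∃ z, Gen H (act x u) (act x (p.1 * z))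

theorem pb_same [Finite T] (hS : RightCoherent S)
    {H : Set ((S × T) × (S × T))} (hf : H.Finite) (k : T) (a b : S) : PB H (a, k) (b, k) :=
  pb_cyc hS (fg_cyc hS hf k) a b

theorem pb_diff [Finite T] (hS : RightCoherent S)
    {H : Set ((S × T) × (S × T))} (hf : H.Finite) {i j : T} (hij : i ≠ j) :
    PB H ((1 : S), i) ((1 : S), j) := by
  obtain ⟨H', hf', hs', h'⟩ := restrict hS {i, j} H hf
  refine ⟨(fun m : (S × T) × (S × T) => (m.1.1, m.2.1)) ''
    {m | (m ∈ H' ∨ m.swap ∈ H') ∧ m.1.2 = i ∧ m.2.2 = j}, ?_, ?_, ?_⟩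
  · refine ((hf'.union (hf'.image Prod.swap)).subset ?_).image _
    rintro p ⟨h | h, _⟩
    · exact Or.inl h
    · exact Or.inr ⟨_, h, Prod.swap_swap p⟩
  · rintro _ ⟨⟨⟨p, i'⟩, ⟨q, j'⟩⟩, ⟨h, rfl, rfl⟩, rfl⟩
    refine (h' _ _ ?_ ?_).2 ?_
    · exact Or.inl rfl
    · exact Or.inr rfl
    simpa [act] using Gen.of' h
  · intro u v h
    replace h := (h' (act (1, i) u) (act (1, j) v) (Or.inl rfl) (Or.inr rfl)).1 h
    have inv : ∀ y, Gen H' (act ((1 : S), i) u) y → y.2 = i ∨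
        ∃ m : (S × T) × (S × T), ((m ∈ H' ∨ m.swap ∈ H') ∧ m.1.2 = i ∧ m.2.2 = j) ∧
          ∃ z, Gen H' (act ((1 : S), i) u) (act m.1 z) := by
      intro y h
      induction h with
      | refl => exact Or.inl rfl
      | tail hg hst ih =>
        obtain ⟨p, q, c, hpq, rfl, rfl⟩ := hst
        rcases ih with ih | ih
        · have hq : q.2 ∈ ({i, j} : Set T) := by
            rcases hpq with h | h
            · exact (hs' _ _ h).2
            · exact (hs' _ _ h).1
          rcases hq with hq | hq
          · exact Or.inl hq
          · exact Or.inr ⟨(p, q), ⟨hpq, ih, hq⟩, c, hg⟩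
        · exact Or.inr ih
    rcases inv _ h with h | ⟨m, hm, z, hz⟩
    · exact absurd h.symm hij
    · refine ⟨_, ⟨m, hm, rfl⟩, z, ?_⟩
      refine (h' _ _ ?_ ?_).2 ?_
      · exact Or.inl rfl
      · exact Or.inl rfl
      obtain ⟨⟨p, i'⟩, q⟩ := m
      obtain ⟨_, h2, _⟩ := hm
      simp only at h2
      subst h2
      simpa [act] using hz

theorem pb_all [Finite T] (hS : RightCoherent S)
    {H : Set ((S × T) × (S × T))} (hf : H.Finite) (x y : S × T) : PB H x y := by
  obtain ⟨a, i⟩ := x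
  obtain ⟨b, j⟩ := y
  by_cases hij : i = j
  · subst hij
    exact pb_same hS hf i a b
  obtain ⟨P, hPf, hP1, hP2⟩ := pb_diff hS hf hij
  choose Q hQf hQ1 hQ2 using fun p : S => pb_same hS hf i a p
  choose W hWf hW1 hW2 using fun p : S => pb_same hS hf j p b
  refine ⟨⋃ k ∈ P, ⋃ p ∈ Q k.1, (fun w : S × S => (p.1 * w.1, w.2)) '' W (k.2 * p.2), ?_, ?_, ?_⟩
  · exact hPf.biUnion fun k _ => (hQf _).biUnion fun p _ => (hWf _).image _
  · intro p' hp'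
    simp only [Set.mem_iUnion] at hp'
    obtain ⟨k, hk, p, hp, w, hw, rfl⟩ := hp'
    have h1 := (hQ1 _ p hp).act w.1
    have h2 := (hP1 k hk).act (p.2 * w.1)
    have h3 := hW1 _ w hw
    simp only [act, one_mul, mul_assoc] at h1 h2 h3 ⊢
    exact (h1.trans h2).trans h3
  · intro u v h
    obtain ⟨k, hk, z, hz⟩ := hP2 (a * u) (b * v) (by simpa [act] using h)
    obtain ⟨p, hp, z1, hz1⟩ := hQ2 k.1 u z (by simpa [act] using hz)
    have h1 := (hQ1 _ p hp).act z1
    have h2 := (hP1 k hk).act (p.2 * z1)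
    simp only [act, one_mul, mul_assoc] at h1 h2 hz1 h
    have h3 : Gen H (k.2 * (p.2 * z1), j) (a * u, i) := (h2.symm.trans h1.symm).trans hz1.symm
    obtain ⟨w, hw, z2, hz2⟩ := hW2 (k.2 * p.2) z1 v (by
      simp only [act, mul_assoc]; exact h3.trans h)
    refine ⟨(p.1 * w.1, w.2), ?_, z2, ?_⟩
    · simp only [Set.mem_iUnion]
      exact ⟨k, hk, p, hp, w, hw, rfl⟩
    · have h4 := (hQ1 _ p hp).act (w.1 * z2)
      have h5 := (hP1 k hk).act (p.2 * (w.1 * z2))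
      simp only [act, one_mul, mul_assoc] at h4 h5 hz2 ⊢
      exact ((h3.symm.trans hz2).trans h5.symm).trans h4.symm

end CohProd

open CohProd in
theorem stmt18 {S T : Type*} [Monoid S] [Monoid T] [Finite T]
    (hS : RightCoherent S) :
    RightCoherent (S × T) := by
  classical
  intro r hr a b
  obtain ⟨H0, hf0, hcong, hgen, hmin⟩ := hr
  set H : Set ((S × T) × (S × T)) :=
    ⋃ t : T, (fun p : (S × T) × (S × T) => (p.1 * (1, t), p.2 * (1, t))) '' H0 with hH
  have hf : H.Finite := Set.finite_iUnion fun t => hf0.image _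
  have hact : ∀ (x : S × T) c, act x c = x * (c, 1) := by
    intro x c; ext <;> simp [act]
  have hrG : ∀ x y, r x y ↔ Gen H x y := by
    intro x y
    constructor
    · refine hmin (Gen H) ⟨Gen.equivalence H, ?_⟩ ?_ x y
      · rintro x y ⟨c, t⟩ h
        induction h with
        | refl => exact Gen.refl _
        | tail _ hst ih =>
          obtain ⟨p, q, d, hpq, rfl, rfl⟩ := hst
          refine ih.trans ?_
          have haux : ∀ p q : S × T, (p, q) ∈ H →
              Gen H (act p d * (c, t)) (act q d * (c, t)) := by
            intro p q h
            simp only [hH, Set.mem_iUnion] at h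
            obtain ⟨t', m, hm, h⟩ := h
            simp only [Prod.mk.injEq] at h
            obtain ⟨rfl, rfl⟩ := h
            have h1 : Gen H (m.1 * (1, t' * t)) (m.2 * (1, t' * t)) := by
              refine Gen.of ?_
              simp only [hH, Set.mem_iUnion]
              exact ⟨t' * t, m, hm, rfl⟩
            have h2 := h1.act (d * c)
            convert h2 using 1 <;> ext <;> simp [act, mul_assoc]
          exact hpq.elim (haux p q) fun h => (haux q p h).symm
      · intro p hp
        refine Gen.of ?_
        simp only [hH, Set.mem_iUnion]
        exact ⟨1, p, hp, by ext <;> simp⟩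
    · refine Gen.min hcong.1 (fun x y c h => ?_) ?_
      · rw [hact, hact]; exact hcong.2 _ _ _ h
      · intro p q h
        simp only [hH, Set.mem_iUnion] at h
        obtain ⟨t, m, hm, h⟩ := h
        simp only [Prod.mk.injEq] at h
        obtain ⟨rfl, rfl⟩ := h
        exact hcong.2 _ _ _ (hgen _ hm)
  have hmul : ∀ (x : S × T) (s : S × T), x * s = act (x * (1, s.2)) s.1 := by
    intro x s; ext <;> simp [act]
  constructor
  · choose P hPf hP1 hP2 using fun t t' : T => pb_all hS hf (a * (1, t)) (b * (1, t'))
    have hCf : (⋃ t : T, ⋃ t' : T, (fun p : S × S => a * (p.1, t)) '' P t t').Finite :=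
      Set.finite_iUnion fun t => Set.finite_iUnion fun t' => (hPf t t').image _
    refine ⟨hCf.toFinset, ?_⟩
    ext x
    simp only [Set.mem_setOf_eq, Set.mem_iUnion, Set.Finite.mem_toFinset, exists_prop]
    constructor
    · rintro ⟨⟨s, hs⟩, ⟨t, ht⟩⟩
      have h := hcong.1.trans (hcong.1.symm hs) ht
      rw [hrG, hmul a, hmul b] at h
      obtain ⟨p, hp, z, hz⟩ := hP2 _ _ _ _ h
      refine ⟨_, ⟨s.2, t.2, p, hp, rfl⟩, (z, 1), hcong.1.trans hs ?_⟩
      rw [hrG, hmul a s]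
      convert hz using 1
      ext <;> simp [act, mul_assoc]
    · rintro ⟨_, ⟨t, t', p, hp, rfl⟩, s, hs⟩
      refine ⟨⟨(p.1, t) * s, by simpa only [mul_assoc] using hs⟩, (p.2, t') * s, ?_⟩
      have h := hP1 _ _ p hp
      rw [← hrG] at h
      have h2 := hcong.2 _ _ s h
      refine hcong.1.trans hs ?_
      convert h2 using 1 <;> ext <;> simp [act, mul_assoc]
  · choose P hPf hP1 hP2 using fun t t' : T => pb_all hS hf (a * (1, t)) (a * (1, t'))
    choose A hAf hA using fun t : T => fg_ann hS hf (a * (1, t))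
    have hA' : ∀ (u : S) (t : T), act (a * (1, t)) u = a * (u, t) := by
      intro u t; ext <;> simp [act]
    simp only [hA', ← hrG] at hP1 hP2 hA
    refine ⟨(⋃ t : T, (fun w : S × S => ((w.1, t), (w.2, t))) '' A t) ∪
      ⋃ t : T, ⋃ t' : T, (fun w : S × S => ((w.1, t), (w.2, t'))) '' P t t', ?_, ⟨⟨?_, ?_, ?_⟩, ?_⟩,
      ?_, ?_⟩
    · exact (Set.finite_iUnion fun t => (hAf t).image _).union
        (Set.finite_iUnion fun t => Set.finite_iUnion fun t' => (hPf t t').image _)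
    · intro x; exact hcong.1.refl _
    · intro x y h; exact hcong.1.symm h
    · intro x y z h h'; exact hcong.1.trans h h'
    · intro x y c h
      have := hcong.2 _ _ c h
      simpa only [mul_assoc] using this
    · rintro p (h | h)
      · simp only [Set.mem_iUnion] at h
        obtain ⟨t, w, hw, rfl⟩ := h
        exact (hA t).2.1 w hw
      · simp only [Set.mem_iUnion] at h
        obtain ⟨t, t', w, hw, rfl⟩ := h
        exact hP1 _ _ w hw
    · rintro r' hr' hH' ⟨u, t⟩ ⟨v, t'⟩ h
      have hann : ∀ t u v, r (a * (u, t)) (a * (v, t)) → r' (u, t) (v, t) := by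
        intro t u v h
        refine (hA t).2.2 (fun u v => r' (u, t) (v, t)) ⟨⟨?_, ?_, ?_⟩, ?_⟩ ?_ u v h
        · intro x; exact hr'.1.refl _
        · intro x y h; exact hr'.1.symm h
        · intro x y z h h'; exact hr'.1.trans h h'
        · intro x y c h
          simpa using hr'.2 _ _ (c, 1) h
        · intro p hp
          refine hH' ((p.1, t), (p.2, t)) (Or.inl ?_)
          simp only [Set.mem_iUnion]
          exact ⟨t, p, hp, rfl⟩
      obtain ⟨p, hp, z, hz⟩ := hP2 t t' u v h
      have h1 : r' (p.1, t) (p.2, t') := by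
        refine hH' ((p.1, t), (p.2, t')) (Or.inr ?_)
        simp only [Set.mem_iUnion]
        exact ⟨t, t', p, hp, rfl⟩
      have h1z : r' (p.1 * z, t) (p.2 * z, t') := by simpa using hr'.2 _ _ (z, 1) h1
      have h2 := hcong.2 _ _ (z, 1) (hP1 t t' p hp)
      have h2z : r (a * (p.1 * z, t)) (a * (p.2 * z, t')) := by
        simpa [mul_assoc] using h2
      have h3 : r (a * (p.2 * z, t')) (a * (v, t')) :=
        hcong.1.trans (hcong.1.symm h2z) (hcong.1.trans (hcong.1.symm hz) h)
      exact hr'.1.trans (hann _ _ _ hz) (hr'.1.trans h1z (hann _ _ _ h3))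
end

section
/- Let S be a monoid, T a finite monoid, and A a right (S × T)-act. Then A is a right S-act under the action a·s = a(s, 1_T), and: (i) A is finitely generated as a right S-act if and only if A is finitely generated as a right (S × T)-act; (ii) A is finitely presented as a right S-act if and only if A is finitely presented as a right (S × T)-act. -/
def ActFG {M A : Type*} [Monoid M] (act : A → M → A) : Prop :=
  ∃ X : Finset A, ∀ a : A, ∃ x ∈ X, ∃ s : M, a = act x s

def IsActCong {M A : Type*} [Monoid M] (act : A → M → A) (r : A → A → Prop) : Prop :=
  Equivalence r ∧ ∀ a b : A, r a b → ∀ s : M, r (act a s) (act b s)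

def ActCongGenBy {M A : Type*} [Monoid M] (act : A → M → A) (H : Set (A × A))
    (r : A → A → Prop) : Prop :=
  IsActCong act r ∧ (∀ p ∈ H, r p.1 p.2) ∧
    ∀ r' : A → A → Prop, IsActCong act r' → (∀ p ∈ H, r' p.1 p.2) →
      ∀ a b : A, r a b → r' a b

def ActFGCong {M A : Type*} [Monoid M] (act : A → M → A) (r : A → A → Prop) : Prop :=
  ∃ H : Set (A × A), H.Finite ∧ ActCongGenBy act H r

def ActFP {M A : Type*} [Monoid M] (act : A → M → A) : Prop :=
  ∃ (n : ℕ) (r : (Fin n × M) → (Fin n × M) → Prop),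
    ActFGCong (fun (p : Fin n × M) (s : M) => (p.1, p.2 * s)) r ∧
    ∃ φ : Fin n × M → A, Function.Surjective φ ∧
      (∀ (p : Fin n × M) (s : M), φ (p.1, p.2 * s) = act (φ p) s) ∧
      ∀ p q : Fin n × M, φ p = φ q ↔ r p q

theorem ActFP_mk {M A ι : Type*} [Monoid M] [Finite ι] (act : A → M → A)
    (φ : ι × M → A) (hs : Function.Surjective φ)
    (hφ : ∀ (p : ι × M) (s : M), φ (p.1, p.2 * s) = act (φ p) s)
    (H : Set ((ι × M) × (ι × M))) (hH : H.Finite) (hk : ∀ p ∈ H, φ p.1 = φ p.2)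
    (hmin : ∀ r' : ι × M → ι × M → Prop,
      IsActCong (fun (p : ι × M) (s : M) => (p.1, p.2 * s)) r' → (∀ p ∈ H, r' p.1 p.2) →
      ∀ p q, φ p = φ q → r' p q) : ActFP act := by
  obtain ⟨n, ⟨e⟩⟩ := Finite.exists_equiv_fin ι
  let f : ι × M → Fin n × M := fun p => (e p.1, p.2)
  let g : Fin n × M → ι × M := fun p => (e.symm p.1, p.2)
  have fg : ∀ p, f (g p) = p := fun p => by simp [f, g]
  have gf : ∀ p, g (f p) = p := fun p => by simp [f, g]
  have gh : ∀ (p : Fin n × M) (s : M), φ (g (p.1, p.2 * s)) = act (φ (g p)) s :=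
    fun p s => hφ (g p) s
  refine ⟨n, fun p q => φ (g p) = φ (g q), ⟨(fun p => (f p.1, f p.2)) '' H, hH.image _, 
    ⟨⟨fun _ => rfl, fun h => h.symm, fun h h' => h.trans h'⟩, ?_⟩, ?_, ?_⟩,
    fun p => φ (g p), ?_, gh, fun _ _ => Iff.rfl⟩
  · intro a b h s
    simp only [gh, h]
  · rintro _ ⟨p, hp, rfl⟩
    simpa only [gf] using hk p hp
  · intro r' hr' hHr a b hab
    have := hmin (fun p q => r' (f p) (f q))
      ⟨⟨fun _ => hr'.1.refl _, fun h => hr'.1.symm h, fun h h' => hr'.1.trans h h'⟩,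
        fun a b h s => hr'.2 _ _ h s⟩ (fun p hp => hHr _ ⟨p, hp, rfl⟩) _ _ hab
    simpa only [fg] using this
  · intro a
    obtain ⟨p, rfl⟩ := hs a
    exact ⟨f p, by simp only [gf]⟩

theorem stmt19 {S T A : Type*} [Monoid S] [Monoid T] [Finite T]
    (act : A → S × T → A)
    (hone : ∀ a : A, act a 1 = a)
    (hmul : ∀ (a : A) (p q : S × T), act a (p * q) = act (act a p) q) :
    (∀ a : A, act a ((1 : S), (1 : T)) = a) ∧
    (∀ (a : A) (s t : S),
      act a (s * t, (1 : T)) = act (act a (s, (1 : T))) (t, (1 : T))) ∧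
    (ActFG (fun (a : A) (s : S) => act a (s, 1)) ↔ ActFG act) ∧
    (ActFP (fun (a : A) (s : S) => act a (s, 1)) ↔ ActFP act) := by
  classical
  have := Fintype.ofFinite T
  have h11 : ∀ a : A, act a ((1 : S), (1 : T)) = a := hone
  have hS : ∀ (a : A) (s t : S),
      act a (s * t, (1 : T)) = act (act a (s, (1 : T))) (t, (1 : T)) := by
    intro a s t
    rw [← hmul]; simp
  refine ⟨h11, hS, ⟨?_, ?_⟩, ⟨?_, ?_⟩⟩
  · rintro ⟨X, hX⟩
    refine ⟨X, fun a => ?_⟩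
    obtain ⟨x, hx, s, h⟩ := hX a
    exact ⟨x, hx, (s, 1), h⟩
  · rintro ⟨X, hX⟩
    refine ⟨(X ×ˢ Finset.univ).image (fun p : A × T => act p.1 (1, p.2)), fun a => ?_⟩
    obtain ⟨x, hx, ⟨s, t⟩, h⟩ := hX a
    refine ⟨act x (1, t), Finset.mem_image.2 ⟨(x, t), by simp [hx], rfl⟩, s, ?_⟩
    simp only [← hmul, h, Prod.mk_mul_mk, one_mul, mul_one]
  · rintro ⟨n, r, ⟨H, hH, hc, hHr, hmin⟩, φ, hs, hφ, hr⟩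
    have hφ1 : ∀ i s, φ (i, s) = act (φ (i, 1)) (s, 1) := fun i s => by
      have := hφ (i, 1) s
      simpa using this
    have hch : ∀ q : Fin n × T, ∃ p : Fin n × S, φ p = act (φ (q.1, 1)) (1, q.2) :=
      fun q => hs _
    choose c hc' using hch
    refine ActFP_mk (ι := Fin n) act (fun p => act (φ (p.1, 1)) p.2) ?_ ?_
      ((fun p : (Fin n × S) × (Fin n × S) => ((p.1.1, (p.1.2, (1 : T))), (p.2.1, (p.2.2, (1 : T))))) '' H ∪
        Set.range (fun q : Fin n × T => ((q.1, ((1 : S), q.2)), ((c q).1, ((c q).2, (1 : T))))))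
      ((hH.image _).union (Set.finite_range _)) ?_ ?_
    · intro a
      obtain ⟨p, rfl⟩ := hs a
      exact ⟨(p.1, (p.2, 1)), (hφ1 p.1 p.2).symm⟩
    · intro p s
      exact hmul _ _ _
    · rintro _ (⟨p, hp, rfl⟩ | ⟨q, rfl⟩)
      · simp only [← hφ1]
        exact (hr _ _).2 (hHr p hp)
      · simp only [← hφ1]
        exact (hc' q).symm
    · intro r' hr' hH' 
      have hsub : ∀ p q : Fin n × S, φ p = φ q → r' (p.1, (p.2, 1)) (q.1, (q.2, 1)) := by
        intro p q h
        refine hmin (fun p q => r' (p.1, (p.2, 1)) (q.1, (q.2, 1)))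
          ⟨⟨fun _ => hr'.1.refl _, fun h => hr'.1.symm h, fun h h' => hr'.1.trans h h'⟩, ?_⟩
          (fun p hp => hH' _ (Or.inl ⟨p, hp, rfl⟩)) p q ((hr _ _).1 h)
        intro a b h s
        simpa using hr'.2 _ _ h (s, 1)
      have hred : ∀ p : Fin n × (S × T), ∃ q : Fin n × S,
          r' p (q.1, (q.2, 1)) ∧ φ q = act (φ (p.1, 1)) p.2 := by
        rintro ⟨i, s, t⟩
        refine ⟨((c (i, t)).1, (c (i, t)).2 * s), ?_, ?_⟩
        · simpa using hr'.2 _ _ (hH' _ (Or.inr ⟨(i, t), rfl⟩)) (s, 1)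
        · rw [hφ, hc']; simp [← hmul]
      intro p q h
      obtain ⟨p', hp, hp'⟩ := hred p
      obtain ⟨q', hq, hq'⟩ := hred q
      exact hr'.1.trans hp (hr'.1.trans (hsub p' q' (by rw [hp', hq']; exact h)) (hr'.1.symm hq))
  · rintro ⟨n, r, ⟨H, hH, hc, hHr, hmin⟩, φ, hs, hφ, hr⟩
    let g : Fin n × (S × T) → (Fin n × T) × S := fun p => ((p.1, p.2.2), p.2.1)
    let m : Fin n × (S × T) → S × T → Fin n × (S × T) := fun p s => (p.1, p.2 * s)
    refine ActFP_mk (ι := Fin n × T) _ (fun p => φ (p.1.1, (p.2, p.1.2))) ?_ ?_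
      ((fun z : ((Fin n × (S × T)) × (Fin n × (S × T))) × T =>
        (g (m z.1.1 (1, z.2)), g (m z.1.2 (1, z.2)))) '' (H ×ˢ Set.univ))
      ((hH.prod Set.finite_univ).image _) ?_ ?_
    · intro a
      obtain ⟨p, rfl⟩ := hs a
      exact ⟨g p, rfl⟩
    · intro p s
      have := hφ (p.1.1, (p.2, p.1.2)) (s, 1)
      simpa using this
    · rintro _ ⟨⟨p, t⟩, ⟨hp, -⟩, rfl⟩
      have h := (hr _ _).2 (hc.2 _ _ (hHr p hp) (1, t))
      exact h
    · intro r' hr' hH' p q h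
      have key := hmin (fun a b => ∀ t : T, r' (g (m a (1, t))) (g (m b (1, t))))
        ⟨⟨fun _ _ => hr'.1.refl _, fun h t => hr'.1.symm (h t),
          fun h h' t => hr'.1.trans (h t) (h' t)⟩, ?_⟩
        (fun p hp t => hH' _ ⟨(p, t), ⟨hp, trivial⟩, rfl⟩) _ _ ((hr _ _).1 h) 1
      · simpa [g, m] using key
      · rintro a b h ⟨s, u⟩ t
        have := hr'.2 _ _ (h (u * t)) s
        simpa [g, m, mul_assoc] using this
end
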